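/- arXiv:2203.17107 — 3 statements merged into one kernel-verified Lean document; each statement's English description precedes it below -/
import Mathlib

section
/- Let h be a convex normal integrand on ℝⁿ. The following are equivalent: (1) h is L-bounded, i.e. there exist nonnegative ρ, m ∈ L¹(P) with h(x,ω) ≥ −ρ(ω)|x| − m(ω) for all x ∈ ℝⁿ and a.e. ω; (2) there exist v ∈ L¹(Ω,F,P;ℝⁿ) and m ∈ L¹(P) such that h(x,ω) ≥ x·v(ω) − m(ω) for all x ∈ ℝⁿ and a.e. ω; (3) there exists v ∈ L¹(Ω,F,P;ℝⁿ) such that the integral ∫ h*(v(ω),ω) dP(ω) is finite, where h*(y,ω) := sup_{x∈ℝⁿ} { x·y − h(x,ω) } and the integral is defined to be +∞ unless the positive part of the integrand is integrable. -/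
/-!
The equivalence of the affine minorant and the finiteness of the integral of `h*(v)` is the
Fenchel–Young inequality, once `ω ↦ h*(v(ω), ω)` is known to be measurable. This function is a
supremum over an uncountable set, and its measurability is the measurable projection theorem for
complete measures. That theorem is obtained here from two facts: a measurable subset of `E × Ω` is
pulled back from `E × (ℕ → Bool)` along a measurable map `Ω → (ℕ → Bool)`
(`exists_cantor_factor`), and analytic sets are universally measurable
(`analyticSet_nullMeasurableSet`).

To pass from `h ≥ -ρ‖x‖ - m` to an affine minorant, replace `h` by its Pasch–Hausdorff envelope
`inf_z (h(z, ω) + ρ‖x - z‖) + m`, which is convex, `ρ`-Lipschitz, nonnegative at the origin, at most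
`h + m`, and measurable in `ω` by the projection theorem again. A linear minorant of it is found by
a constructive Hahn–Banach argument. For a convex `f` with `f 0 ≥ 0` let
`a = inf_{s > 0} f(s e) / s`; then `x ↦ inf_t (f(x + t e) - t a)` is a minorant of `f` with the same
properties which is moreover affine of slope `a` in the direction `e` (`straighten`). Doing this
along each coordinate axis yields `f_n(x) = f_n(0) + ⟪x, v⟫ ≥ ⟪x, v⟫`, with `‖v‖ ≤ ρ` because `f_n`
is still `ρ`-Lipschitz. Those infima are over a real parameter of continuous functions, hence can be
taken over the rationals, so `v` is measurable in `ω`. Integrability of `v` follows from `‖v‖ ≤ ρ`.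
-/

open MeasureTheory ENNReal
open scoped RealInnerProductSpace

noncomputable section

namespace PaperDP

variable {Ω : Type*}

/-- The positive part of an extended real number, as an element of `ℝ≥0∞`. -/
def ePos (x : EReal) : ℝ≥0∞ := if x = ⊤ then ⊤ else ENNReal.ofReal x.toReal

/-- The extended integral of an extended-real-valued function: it is `+∞` unless the
positive part of the integrand is integrable, in which case it is the difference of the
integrals of the positive and negative parts. -/
def EInt {mΩ : MeasurableSpace Ω} (μ : Measure Ω) (ξ : Ω → EReal) : EReal :=
  if (∫⁻ ω, ePos (ξ ω) ∂μ) = ⊤ then ⊤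
  else ((∫⁻ ω, ePos (ξ ω) ∂μ : ℝ≥0∞) : EReal) - ((∫⁻ ω, ePos (-(ξ ω)) ∂μ : ℝ≥0∞) : EReal)

/-- An extended-real-valued random variable is quasi-integrable if its positive part or
its negative part is integrable. -/
def QuasiIntegrable {mΩ : MeasurableSpace Ω} (μ : Measure Ω) (ξ : Ω → EReal) : Prop :=
  (∫⁻ ω, ePos (ξ ω) ∂μ) ≠ ⊤ ∨ (∫⁻ ω, ePos (-(ξ ω)) ∂μ) ≠ ⊤

/-- `ξ'` is a version of the `G`-conditional expectation of the extended-real random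
variable `ξ`: it is `G`-measurable and satisfies `E[α ξ'] = E[α ξ]` for every bounded
nonnegative `G`-measurable real `α`. -/
def IsCondExpER {mΩ : MeasurableSpace Ω} (μ : Measure Ω) (G : MeasurableSpace Ω)
    (ξ ξ' : Ω → EReal) : Prop :=
  Measurable[G] ξ' ∧
  ∀ α : Ω → ℝ, Measurable[G] α → (∀ ω, 0 ≤ α ω) → (∃ C, ∀ ω, α ω ≤ C) →
    EInt μ (fun ω => (α ω : EReal) * ξ' ω) = EInt μ (fun ω => (α ω : EReal) * ξ ω)

/-- A normal integrand with respect to the σ-algebra `m` on `Ω`: a jointly measurable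
function (with respect to `B(E) ⊗ m`) with values in `ℝ ∪ {+∞}` which is lower
semicontinuous in its first argument. -/
def IsNormalIntegrand {E : Type*} [TopologicalSpace E] [MeasurableSpace E]
    (m : MeasurableSpace Ω) (h : E → Ω → EReal) : Prop :=
  Measurable[MeasurableSpace.prod inferInstance m] (fun p : E × Ω => h p.1 p.2) ∧
  (∀ ω, LowerSemicontinuous fun x => h x ω) ∧ ∀ x ω, h x ω ≠ ⊥

/-- `h` is L-bounded: `h(x,ω) ≥ -ρ(ω)‖x‖ - m(ω)` for integrable nonnegative `ρ, m`. -/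
def LBounded {E : Type*} [NormedAddCommGroup E] {mΩ : MeasurableSpace Ω} (μ : Measure Ω)
    (h : E → Ω → EReal) : Prop :=
  ∃ ρ m : Ω → ℝ, Integrable ρ μ ∧ Integrable m μ ∧ (∀ ω, 0 ≤ ρ ω) ∧ (∀ ω, 0 ≤ m ω) ∧
    ∀ᵐ ω ∂μ, ∀ x : E, (↑(-(ρ ω * ‖x‖ + m ω)) : EReal) ≤ h x ω

/-- `hG` is a `G`-conditional expectation of the normal integrand `h`: it is a
`B(E) ⊗ G`-measurable normal integrand such that `hG(x(·),·)` is a version of the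
`G`-conditional expectation of `h(x(·),·)` for every `G`-measurable `x` for which
`h(x(·),·)` is quasi-integrable. -/
def IsCondNI {E : Type*} [TopologicalSpace E] [MeasurableSpace E] {mΩ : MeasurableSpace Ω}
    (μ : Measure Ω) (G : MeasurableSpace Ω) (h hG : E → Ω → EReal) : Prop :=
  IsNormalIntegrand G hG ∧
  ∀ x : Ω → E, Measurable[G] x → QuasiIntegrable μ (fun ω => h (x ω) ω) →
    IsCondExpER μ G (fun ω => h (x ω) ω) (fun ω => hG (x ω) ω)

/-- The recession function of `g`: `g^∞(y) = sup_{r>0} (g(z + r y) - g(z))/r`, where `z`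
is any point with `g(z) < ∞` (for a proper lsc convex function the value does not depend
on the choice of `z`; we take the infimum over all such `z`). -/
def recessionFn {E : Type*} [AddCommGroup E] [Module ℝ E] (g : E → EReal) (y : E) : EReal :=
  ⨅ z : {z : E // g z < ⊤}, ⨆ r : {r : ℝ // 0 < r},
    ((r.1⁻¹ : ℝ) : EReal) * (g (z.1 + r.1 • y) - g z.1)

/-- Convexity of an extended-real-valued function. -/
def ConvexEFn {E : Type*} [AddCommGroup E] [Module ℝ E] (g : E → EReal) : Prop :=
  ∀ x y : E, ∀ a b : ℝ, 0 ≤ a → 0 ≤ b → a + b = 1 →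
    g (a • x + b • y) ≤ (a : EReal) * g x + (b : EReal) * g y

/-- A convex integrand: `h(·,ω)` is convex for every `ω`. -/
def ConvexIntegrand {E : Type*} [AddCommGroup E] [Module ℝ E]
    (h : E → Ω → EReal) : Prop :=
  ∀ ω, ConvexEFn (fun x => h x ω)


/-! ### Measurable projection -/

/-- If the compact box of sequences dominated by `N` lies in an open set `V`, then so does one of
the cylinders obtained by bounding only finitely many coordinates. -/
theorem exists_cylinder_subset (N : ℕ → ℕ) (S : ℕ → Set (ℕ → ℕ))
    (hS : ∀ k, ∀ x ∈ S k, ∀ i < k, x i ≤ N i) {V : Set (ℕ → ℕ)} (hV : IsOpen V)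
    (hNV : Set.univ.pi (fun i => Set.Iic (N i)) ⊆ V) : ∃ k, S k ⊆ V := by
  by_contra hcon
  simp only [not_exists, Set.not_subset] at hcon
  choose x hxS hxV using hcon
  have hK : IsCompact (Set.univ.pi (fun i => Set.Iic (N i))) :=
    isCompact_univ_pi fun i => (Set.finite_Iic (N i)).isCompact
  obtain ⟨y, hy, φ, hφ, hlim⟩ := hK.tendsto_subseq (x := fun k i => min (x k i) (N i))
    (fun k i _ => Set.mem_Iic.2 (min_le_right _ _))
  have hlim' : Filter.Tendsto (x ∘ φ) Filter.atTop (nhds y) := by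
    rw [tendsto_pi_nhds] at hlim ⊢
    intro i
    refine (hlim i).congr' ?_
    filter_upwards [Filter.eventually_gt_atTop i] with k hk
    exact min_eq_left (hS _ _ (hxS _) i (hk.trans_le (hφ.id_le k)))
  obtain ⟨k, hk⟩ := (hlim'.eventually (hV.mem_nhds (hNV hy))).exists
  exact hxV _ hk

/-- A continuous image of Baire space is approximated in measure from inside by compact sets. -/
theorem exists_compact_range {X : Type*} [TopologicalSpace X] [MeasurableSpace X]
    (ν : Measure X) [IsFiniteMeasure ν] [ν.OuterRegular] {g : (ℕ → ℕ) → X} (hg : Continuous g)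
    {ε : ℝ≥0∞} (hε : ε ≠ 0) :
    ∃ K, IsCompact K ∧ K ⊆ Set.range g ∧ ν (Set.range g) ≤ ν K + ε := by
  obtain ⟨δ, hδ, hδs⟩ := ENNReal.exists_pos_sum_of_countable' hε ℕ
  -- Bounding one more coordinate by a large enough constant costs little measure, because outer
  -- measures are continuous along increasing unions.
  have step : ∀ (A : Set (ℕ → ℕ)) (k : ℕ), ∃ N : ℕ,
      ν (g '' A) ≤ ν (g '' (A ∩ {x | x k ≤ N})) + δ k := by
    intro A k
    have hmono : Monotone fun N : ℕ => g '' (A ∩ {x | x k ≤ N}) := by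
      intro a b hab
      exact Set.image_mono (Set.inter_subset_inter_right _ fun x (hx : x k ≤ a) => hx.trans hab)
    have hU : (⋃ N : ℕ, g '' (A ∩ {x | x k ≤ N})) = g '' A := by
      rw [← Set.image_iUnion, ← Set.inter_iUnion]
      congr 1
      refine Set.inter_eq_left.2 fun x _ => Set.mem_iUnion.2 ⟨x k, le_refl (x k)⟩
    rw [← hU, hmono.measure_iUnion]
    set M := ⨆ N : ℕ, ν (g '' (A ∩ {x | x k ≤ N})) with hM
    have hMtop : M ≠ ⊤ := ne_top_of_le_ne_top (measure_ne_top ν Set.univ)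
      (iSup_le fun _ => measure_mono (Set.subset_univ _))
    rcases eq_or_ne M 0 with h0 | h0
    · exact ⟨0, by simp [h0]⟩
    · obtain ⟨N, hN⟩ := lt_iSup_iff.1 (ENNReal.sub_lt_self hMtop h0 (hδ k).ne')
      exact ⟨N, tsub_le_iff_right.1 hN.le⟩
  choose b hb using step
  let S : ℕ → Set (ℕ → ℕ) := fun k => Nat.rec Set.univ (fun k A => A ∩ {x | x k ≤ b A k}) k
  let N : ℕ → ℕ := fun k => b (S k) k
  have hSs : ∀ k, S (k + 1) = S k ∩ {x | x k ≤ N k} := fun k => rfl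
  have hS : ∀ k, ∀ x ∈ S k, ∀ i < k, x i ≤ N i := by
    intro k
    induction k with
    | zero => intro x _ i hi; omega
    | succ k ih =>
      intro x hx i hi
      rw [hSs] at hx
      rcases Nat.lt_succ_iff_lt_or_eq.1 hi with h | rfl
      · exact ih x hx.1 i h
      · exact hx.2
  have hSm : ∀ k, ν (Set.range g) ≤ ν (g '' S k) + ∑ i ∈ Finset.range k, δ i := by
    intro k
    induction k with
    | zero => simp [S]
    | succ k ih =>
      rw [Finset.sum_range_succ, add_comm (∑ i ∈ Finset.range k, δ i), ← add_assoc]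
      exact ih.trans (add_le_add_left (hb (S k) k) _)
  refine ⟨g '' Set.univ.pi (fun i => Set.Iic (N i)),
    (isCompact_univ_pi fun i => (Set.finite_Iic (N i)).isCompact).image hg,
    Set.image_subset_range _ _, ?_⟩
  rw [Set.measure_eq_iInf_isOpen (g '' _) ν]
  simp only [ENNReal.iInf_add]
  refine le_iInf fun U => le_iInf fun hU => le_iInf fun hUo => ?_
  obtain ⟨k, hk⟩ := exists_cylinder_subset N S hS (hUo.preimage hg) (Set.image_subset_iff.1 hU)
  exact (hSm k).trans (add_le_add (measure_mono (Set.image_subset_iff.2 hk))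
    ((ENNReal.sum_le_tsum _).trans hδs.le))

/-- Analytic sets are universally measurable. -/
theorem analyticSet_nullMeasurableSet {X : Type*} [TopologicalSpace X] [T2Space X]
    [MeasurableSpace X] [BorelSpace X] (ν : Measure X) [IsFiniteMeasure ν] [ν.OuterRegular]
    {A : Set X} (hA : AnalyticSet A) : NullMeasurableSet A ν := by
  rw [AnalyticSet] at hA
  rcases hA with rfl | ⟨g, hg, rfl⟩
  · exact MeasurableSet.empty.nullMeasurableSet
  have hK := fun k : ℕ => exists_compact_range ν hg (ε := ((k : ℝ≥0∞) + 1)⁻¹) (by simp)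
  choose K hKc hKs hKm using hK
  have hm : MeasurableSet (⋃ k, K k) := .iUnion fun k => (hKc k).isClosed.measurableSet
  have hle : ν (Set.range g) ≤ ν (⋃ k, K k) := by
    have hlim : Filter.Tendsto (fun k : ℕ => ν (⋃ k, K k) + ((k : ℝ≥0∞) + 1)⁻¹) Filter.atTop
        (nhds (ν (⋃ k, K k) + 0)) := by
      refine tendsto_const_nhds.add ?_
      have := (Filter.tendsto_add_atTop_iff_nat 1).2 ENNReal.tendsto_inv_nat_nhds_zero
      simpa using this
    rw [add_zero] at hlim
    refine ge_of_tendsto' hlim fun k => (hKm k).trans ?_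
    exact add_le_add_left (measure_mono (Set.subset_iUnion K k)) _
  exact hm.nullMeasurableSet.congr (ae_eq_of_subset_of_measure_ge (Set.iUnion_subset hKs) hle
    hm.nullMeasurableSet (measure_ne_top _ _))

/-- A measurable subset of a product only involves countably many measurable sets of the second
factor, so it is pulled back from a product with Cantor space. -/
theorem exists_cantor_factor {E : Type*} [MeasurableSpace E] [mΩ : MeasurableSpace Ω]
    {S : Set (E × Ω)} (hS : MeasurableSet S) :
    ∃ f : Ω → ℕ → Bool, Measurable f ∧ ∃ T : Set (E × (ℕ → Bool)), MeasurableSet T ∧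
      S = Prod.map id f ⁻¹' T := by
  rw [← generateFrom_prod] at hS
  induction S, hS using MeasurableSpace.generateFrom_induction with
  | hC t ht =>
    obtain ⟨s, hs, u, hu, rfl⟩ := ht
    classical
    refine ⟨fun ω _ => decide (ω ∈ u), ?_, s ×ˢ {z | z 0 = true}, ?_, ?_⟩
    · refine measurable_pi_lambda _ fun _ => ?_
      exact measurable_to_bool (by simpa [Set.preimage] using hu)
    · refine MeasurableSet.prod hs ?_
      exact (measurable_pi_apply (X := fun _ : ℕ => Bool) 0) (measurableSet_singleton true)
    · ext ⟨x, ω⟩; simp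
  | empty => exact ⟨fun _ _ => true, measurable_const, ∅, .empty, by simp⟩
  | compl t ht ih =>
    obtain ⟨f, hf, T, hT, rfl⟩ := ih
    exact ⟨f, hf, Tᶜ, hT.compl, rfl⟩
  | iUnion s hs ih =>
    choose f hf T hT hsT using ih
    let π : ℕ → (ℕ → Bool) → ℕ → Bool := fun i z j => z (Nat.pair i j)
    have hπ : ∀ i, Measurable (π i) := fun i =>
      measurable_pi_lambda _ fun j => measurable_pi_apply _
    refine ⟨fun ω k => f k.unpair.1 ω k.unpair.2, ?_, ⋃ i, Prod.map id (π i) ⁻¹' T i, ?_, ?_⟩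
    · exact measurable_pi_lambda _ fun k => (measurable_pi_apply _).comp (hf _)
    · exact .iUnion fun i => (measurable_id.prodMap (hπ i)) (hT i)
    · rw [Set.preimage_iUnion]
      refine Set.iUnion_congr fun i => ?_
      rw [hsT i]
      ext ⟨x, ω⟩
      simp [π]

/-- **Measurable projection theorem** for a complete finite measure. -/
theorem measurableSet_snd_image {E : Type*} [MeasurableSpace E] [StandardBorelSpace E]
    [mΩ : MeasurableSpace Ω] (μ : Measure Ω) [IsFiniteMeasure μ] [μ.IsComplete]
    {S : Set (E × Ω)} (hS : MeasurableSet S) : MeasurableSet (Prod.snd '' S) := by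
  obtain ⟨f, hf, T, hT, rfl⟩ := exists_cantor_factor hS
  have hA : AnalyticSet (Prod.snd '' T) := hT.analyticSet_image measurable_snd
  have hnull := (analyticSet_nullMeasurableSet (μ.map f) hA).preimage
    (hf.quasiMeasurePreserving μ)
  have heq : Prod.snd '' (Prod.map id f ⁻¹' T : Set (E × Ω)) = f ⁻¹' (Prod.snd '' T) := by
    ext ω
    simp
  rw [heq]
  exact hnull.measurable_of_complete

/-- Over a complete finite measure, partial suprema of jointly measurable functions over a
standard Borel space are measurable. -/
theorem measurable_iSup_left {E : Type*} [MeasurableSpace E] [StandardBorelSpace E]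
    [mΩ : MeasurableSpace Ω] (μ : Measure Ω) [IsFiniteMeasure μ] [μ.IsComplete]
    {F : E × Ω → EReal} (hF : Measurable F) : Measurable fun ω => ⨆ x, F (x, ω) := by
  refine measurable_of_Ioi fun c => ?_
  convert measurableSet_snd_image μ (hF measurableSet_Ioi : MeasurableSet (F ⁻¹' Set.Ioi c))
  ext ω
  simp [lt_iSup_iff]

theorem measurable_iInf_left {E : Type*} [MeasurableSpace E] [StandardBorelSpace E]
    [mΩ : MeasurableSpace Ω] (μ : Measure Ω) [IsFiniteMeasure μ] [μ.IsComplete]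
    {F : E × Ω → EReal} (hF : Measurable F) : Measurable fun ω => ⨅ x, F (x, ω) := by
  refine measurable_of_Iio fun c => ?_
  convert measurableSet_snd_image μ (hF measurableSet_Iio : MeasurableSet (F ⁻¹' Set.Iio c))
  ext ω
  simp [iInf_lt_iff]

/-! ### A measurable Hahn–Banach construction -/

section HahnBanach

variable {E : Type*} [NormedAddCommGroup E] [NormedSpace ℝ E]

/-- A finite convex function, Lipschitz with constant `ρ` and nonnegative at the origin. -/
structure IsLipConvex (ρ : ℝ) (f : E → ℝ) : Prop where
  convex : ∀ x y : E, ∀ a b : ℝ, 0 ≤ a → 0 ≤ b → a + b = 1 →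
    f (a • x + b • y) ≤ a * f x + b * f y
  zero : 0 ≤ f 0
  lip : ∀ x y, f x ≤ f y + ρ * ‖x - y‖

/-- The infimum of the slopes `f (s • e) / s` over `s > 0`, with `s` written as `exp t`. -/
def slopeAt (f : E → ℝ) (e : E) : ℝ := ⨅ t : ℝ, Real.exp (-t) * f (Real.exp t • e)

/-- The largest minorant of `f` that is affine with slope `slopeAt f e` in the direction `e`.
The infimum is finite when `f` satisfies `IsLipConvex`. -/
def straighten (f : E → ℝ) (e x : E) : ℝ := ⨅ t : ℝ, (f (x + t • e) - t * slopeAt f e)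

variable {ρ : ℝ} {f : E → ℝ}

theorem IsLipConvex.continuous (hf : IsLipConvex ρ f) : Continuous f := by
  have : LipschitzWith ρ.toNNReal f := LipschitzWith.of_le_add_mul _ fun x y => by
    rw [dist_eq_norm]
    refine (hf.lip x y).trans ?_
    gcongr
    exact Real.le_coe_toNNReal ρ
  exact this.continuous

/-- Convexity and `0 ≤ f 0` bound forward slopes below by backward slopes. -/
theorem IsLipConvex.slope_le (hf : IsLipConvex ρ f) (e : E) {s t : ℝ} (hs : 0 < s) (ht : 0 < t) :
    -(s⁻¹ * f ((-s) • e)) ≤ t⁻¹ * f (t • e) := by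
  have hst : 0 < s + t := by positivity
  have h := hf.convex (t • e) ((-s) • e) (s / (s + t)) (t / (s + t)) (by positivity)
    (by positivity) (by field_simp)
  have h0 : (s / (s + t)) • t • e + (t / (s + t)) • (-s) • e = (0 : E) := by
    rw [smul_smul, smul_smul, ← add_smul]
    have : s / (s + t) * t + t / (s + t) * -s = 0 := by ring
    rw [this, zero_smul]
  rw [h0] at h
  have h1 : 0 ≤ s / (s + t) * f (t • e) + t / (s + t) * f ((-s) • e) := hf.zero.trans h
  have h2 : t⁻¹ * f (t • e) + s⁻¹ * f ((-s) • e) =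
      ((s + t) / (s * t)) * (s / (s + t) * f (t • e) + t / (s + t) * f ((-s) • e)) := by
    field_simp
  have h3 : 0 ≤ t⁻¹ * f (t • e) + s⁻¹ * f ((-s) • e) := by rw [h2]; positivity
  linarith

theorem IsLipConvex.mul_slopeAt_le (hf : IsLipConvex ρ f) (e : E) (t : ℝ) :
    t * slopeAt f e ≤ f (t • e) := by
  rcases lt_trichotomy t 0 with ht | rfl | ht
  · have h : -((-t)⁻¹ * f (t • e)) ≤ slopeAt f e := by
      refine le_ciInf fun r => ?_
      have := hf.slope_le e (neg_pos.2 ht) (Real.exp_pos r)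
      rwa [neg_neg, ← Real.exp_neg] at this
    have h2 := mul_le_mul_of_nonneg_left h (neg_pos.2 ht).le
    have h3 : -t * -((-t)⁻¹ * f (t • e)) = -f (t • e) := by
      rw [mul_neg, mul_inv_cancel_left₀ (neg_pos.2 ht).ne']
    rw [h3] at h2
    linarith
  · simpa using hf.zero
  · have hb : BddBelow (Set.range fun t : ℝ => Real.exp (-t) * f (Real.exp t • e)) := by
      refine ⟨-(1⁻¹ * f ((-1 : ℝ) • e)), ?_⟩
      rintro _ ⟨r, rfl⟩
      have := hf.slope_le e one_pos (Real.exp_pos r)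
      rwa [← Real.exp_neg] at this
    have h : slopeAt f e ≤ _ := ciInf_le hb (Real.log t)
    simp only [Real.exp_neg, Real.exp_log ht] at h
    calc t * slopeAt f e ≤ t * (t⁻¹ * f (t • e)) := by gcongr
      _ = f (t • e) := by field_simp

theorem IsLipConvex.bddBelow (hf : IsLipConvex ρ f) (e x : E) :
    BddBelow (Set.range fun t : ℝ => f (x + t • e) - t * slopeAt f e) := by
  refine ⟨-(ρ * ‖x‖), ?_⟩
  rintro _ ⟨t, rfl⟩
  have h1 := hf.lip (t • e) (x + t • e)
  have h2 := hf.mul_slopeAt_le e t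
  rw [show t • e - (x + t • e) = -x by abel, norm_neg] at h1
  dsimp only
  linarith

theorem IsLipConvex.straighten_le' (hf : IsLipConvex ρ f) (e x : E) (t : ℝ) :
    straighten f e x ≤ f (x + t • e) - t * slopeAt f e :=
  ciInf_le (hf.bddBelow e x) t

theorem IsLipConvex.straighten_le (hf : IsLipConvex ρ f) (e x : E) :
    straighten f e x ≤ f x := by
  simpa using hf.straighten_le' e x 0

theorem IsLipConvex.straighten (hf : IsLipConvex ρ f) (e : E) :
    IsLipConvex ρ (straighten f e) where
  convex x y a b ha hb hab := by
    refine le_of_forall_pos_le_add fun ε hε => ?_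
    obtain ⟨s, hs⟩ := exists_lt_of_ciInf_lt (lt_add_of_pos_right (PaperDP.straighten f e x) hε)
    obtain ⟨t, ht⟩ := exists_lt_of_ciInf_lt (lt_add_of_pos_right (PaperDP.straighten f e y) hε)
    have h1 := hf.straighten_le' e (a • x + b • y) (a * s + b * t)
    have h2 := hf.convex (x + s • e) (y + t • e) a b ha hb hab
    rw [show a • (x + s • e) + b • (y + t • e) = a • x + b • y + (a * s + b * t) • e by
      module] at h2
    have h3 := mul_le_mul_of_nonneg_left hs.le ha
    have h4 := mul_le_mul_of_nonneg_left ht.le hb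
    have h5 : a * ε + b * ε = ε := by rw [← add_mul, hab, one_mul]
    linarith
  zero := le_ciInf fun t => by
    have := hf.mul_slopeAt_le e t
    rw [zero_add]
    linarith
  lip x y := by
    rw [← sub_le_iff_le_add]
    refine le_ciInf fun t => ?_
    have h1 := hf.straighten_le' e x t
    have h2 := hf.lip (x + t • e) (y + t • e)
    rw [show x + t • e - (y + t • e) = x - y by abel] at h2
    linarith

theorem IsLipConvex.straighten_add (hf : IsLipConvex ρ f) (e x : E) (s : ℝ) :
    PaperDP.straighten f e (x + s • e) = PaperDP.straighten f e x + s * slopeAt f e := by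
  have key : ∀ (y : E) (r : ℝ), PaperDP.straighten f e (y + r • e) ≤
      PaperDP.straighten f e y + r * slopeAt f e := by
    intro y r
    rw [← sub_le_iff_le_add]
    refine le_ciInf fun t => ?_
    have h := hf.straighten_le' e (y + r • e) (t - r)
    rw [show y + r • e + (t - r) • e = y + t • e by module] at h
    linarith
  refine le_antisymm (key x s) ?_
  have h := key (x + s • e) (-s)
  rw [show x + s • e + (-s) • e = x by module] at h
  linarith

/-- Straightening in the direction `e` keeps a direction `d` in which `f` is already affine. -/
theorem straighten_add_of_affine (e d : E) (c : ℝ)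
    (hd : ∀ x (s : ℝ), f (x + s • d) = f x + s * c) (hf : IsLipConvex ρ f) (x : E) (s : ℝ) :
    PaperDP.straighten f e (x + s • d) = PaperDP.straighten f e x + s * c := by
  have h : ∀ t : ℝ, f (x + s • d + t • e) - t * slopeAt f e =
      (f (x + t • e) - t * slopeAt f e) + s * c := by
    intro t
    rw [show x + s • d + t • e = x + t • e + s • d by abel, hd]
    ring
  unfold PaperDP.straighten
  simp only [h]
  exact (ciInf_add (hf.bddBelow e x) _).symm

variable [mΩ : MeasurableSpace Ω]

/-- The infimum over the reals of a family of continuous functions with measurable parameter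
dependence is measurable, since it may be taken over the rationals. -/
theorem measurable_iInf_real {F : ℝ → Ω → ℝ} (hm : ∀ t, Measurable (F t))
    (hc : ∀ ω, Continuous fun t => F t ω) : Measurable fun ω => ⨅ t, F t ω := by
  have h : (fun ω => ⨅ t, F t ω) = fun ω => ⨅ q : Set.range ((↑) : ℚ → ℝ), F q ω := by
    funext ω
    exact (Dense.ciInf' Rat.denseRange_cast (hc ω)).symm
  rw [h]
  have : Countable (Set.range ((↑) : ℚ → ℝ)) := (Set.countable_range _).to_subtype
  exact Measurable.iInf fun q => hm q

variable {r : Ω → ℝ} {F : Ω → E → ℝ}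

theorem measurable_slopeAt (hF : ∀ ω, IsLipConvex (r ω) (F ω))
    (hm : ∀ x, Measurable fun ω => F ω x) (e : E) : Measurable fun ω => slopeAt (F ω) e := by
  refine measurable_iInf_real (fun t => (hm _).const_mul _) fun ω => ?_
  have := (hF ω).continuous
  fun_prop

theorem measurable_straighten (hF : ∀ ω, IsLipConvex (r ω) (F ω))
    (hm : ∀ x, Measurable fun ω => F ω x) (e x : E) :
    Measurable fun ω => straighten (F ω) e x := by
  refine measurable_iInf_real
    (fun t => (hm _).sub ((measurable_slopeAt hF hm e).const_mul _)) fun ω => ?_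
  have := (hF ω).continuous
  fun_prop

/-- Straightening finitely many directions one after the other, measurably in `ω`. -/
theorem exists_affine_directions {ι : Type*} (e : ι → E) (s : Finset ι)
    (hF : ∀ ω, IsLipConvex (r ω) (F ω)) (hm : ∀ x, Measurable fun ω => F ω x) :
    ∃ G : Ω → E → ℝ, ∃ a : ι → Ω → ℝ, (∀ ω, IsLipConvex (r ω) (G ω)) ∧
      (∀ x, Measurable fun ω => G ω x) ∧ (∀ i, Measurable (a i)) ∧ (∀ ω x, G ω x ≤ F ω x) ∧
      ∀ i ∈ s, ∀ ω x (t : ℝ), G ω (x + t • e i) = G ω x + t * a i ω := by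
  classical
  induction s using Finset.induction_on with
  | empty => exact ⟨F, fun _ _ => 0, hF, hm, fun _ => measurable_const, fun _ _ => le_rfl, by simp⟩
  | insert j s hj ih =>
    obtain ⟨G, a, hG, hGm, ha, hle, haff⟩ := ih
    refine ⟨fun ω => straighten (G ω) (e j),
      Function.update a j fun ω => slopeAt (G ω) (e j), fun ω => (hG ω).straighten _,
      fun x => measurable_straighten hG hGm _ _, fun i => ?_,
      fun ω x => ((hG ω).straighten_le _ _).trans (hle ω x), fun i hi ω x t => ?_⟩
    · rcases eq_or_ne i j with rfl | hij
      · simpa using measurable_slopeAt hG hGm _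
      · simpa [hij] using ha i
    · rcases eq_or_ne i j with rfl | hij
      · simpa using (hG ω).straighten_add (e i) x t
      · have his : i ∈ s := Finset.mem_of_mem_insert_of_ne hi hij
        simpa [hij] using straighten_add_of_affine (e j) (e i) (a i ω) (haff i his ω) (hG ω) x t

end HahnBanach

/-- A measurable family of Lipschitz convex functions on Euclidean space which are nonnegative at
the origin has a measurable selection of linear minorants. -/
theorem exists_measurable_minorant [mΩ : MeasurableSpace Ω] {n : ℕ} {r : Ω → ℝ}
    {F : Ω → EuclideanSpace ℝ (Fin n) → ℝ} (hF : ∀ ω, IsLipConvex (r ω) (F ω))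
    (hm : ∀ x, Measurable fun ω => F ω x) (hr : ∀ ω, 0 ≤ r ω) :
    ∃ v : Ω → EuclideanSpace ℝ (Fin n), Measurable v ∧ (∀ ω, ‖v ω‖ ≤ r ω) ∧
      ∀ ω x, ⟪x, v ω⟫ ≤ F ω x := by
  obtain ⟨G, a, hG, -, ha, hle, haff⟩ :=
    exists_affine_directions (fun i : Fin n => EuclideanSpace.single i (1 : ℝ)) Finset.univ hF hm
  let v : Ω → EuclideanSpace ℝ (Fin n) := fun ω => WithLp.toLp 2 fun i => a i ω
  have hsum : ∀ ω (x : EuclideanSpace ℝ (Fin n)) (s : Finset (Fin n)),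
      G ω (∑ i ∈ s, x i • EuclideanSpace.single i (1 : ℝ)) = G ω 0 + ∑ i ∈ s, x i * a i ω := by
    intro ω x s
    classical
    induction s using Finset.induction_on with
    | empty => simp
    | insert j s hj ih =>
      rw [Finset.sum_insert hj, Finset.sum_insert hj, add_comm,
        haff j (Finset.mem_univ j) ω _ (x j), ih]
      ring
  have hGv : ∀ ω x, G ω x = G ω 0 + ⟪x, v ω⟫ := by
    intro ω x
    have h1 : ∑ i, x i • EuclideanSpace.single i (1 : ℝ) = x := by
      ext j
      simp [Finset.sum_apply, Pi.single_apply]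
    have h2 : ⟪x, v ω⟫ = ∑ i, x i * a i ω := by
      simp [v, PiLp.inner_apply, mul_comm]
    rw [h2, ← hsum ω x Finset.univ, h1]
  refine ⟨v, ?_, fun ω => ?_, fun ω x => ?_⟩
  · exact (WithLp.measurable_toLp 2 _).comp (measurable_pi_lambda _ ha)
  · have h1 := (hG ω).lip (v ω) 0
    rw [hGv ω (v ω), real_inner_self_eq_norm_sq, sub_zero] at h1
    rcases (norm_nonneg (v ω)).eq_or_lt with h0 | h0
    · rw [← h0]; exact hr ω
    · nlinarith
  · have h1 := hGv ω x
    have h2 := (hG ω).zero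
    have h3 := hle ω x
    linarith

/-! ### The Pasch–Hausdorff envelope -/

/-- The envelope `x ↦ inf_z (H z + ρ ‖x - z‖ + m)`, that is, `m` plus the largest `ρ`-Lipschitz
minorant of `H`. It takes the junk value `0` when `H` is identically `⊤`. -/
def envelope {E : Type*} [NormedAddCommGroup E] (H : E → EReal) (ρ m : ℝ) (x : E) : ℝ :=
  (⨅ z, H z + ((ρ * ‖x - z‖ + m : ℝ) : EReal)).toReal

section Envelope

variable {E : Type*} [NormedAddCommGroup E] {H : E → EReal} {ρ m : ℝ}

theorem envelope_lt_iff (hρ : 0 ≤ ρ)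
    (hb : ∀ x, ((-(ρ * ‖x‖ + m) : ℝ) : EReal) ≤ H x) (hex : ∃ z, H z ≠ ⊤) (x : E) (c : ℝ) :
    envelope H ρ m x < c ↔ ∃ z, ∃ r : ℝ, H z ≤ r ∧ r + (ρ * ‖x - z‖ + m) < c := by
  have hbot : ∀ z, H z ≠ ⊥ := fun z hz => by
    have := hb z
    rw [hz, le_bot_iff] at this
    exact EReal.coe_ne_bot _ this
  set I := ⨅ z, H z + ((ρ * ‖x - z‖ + m : ℝ) : EReal) with hI
  have hIbot : I ≠ ⊥ := by
    have : ((-(ρ * ‖x‖) : ℝ) : EReal) ≤ I := by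
      refine le_iInf fun z => ?_
      have h1 : ((-(ρ * ‖x‖) : ℝ) : EReal) ≤
          ((-(ρ * ‖z‖ + m) : ℝ) : EReal) + ((ρ * ‖x - z‖ + m : ℝ) : EReal) := by
        rw [← EReal.coe_add, EReal.coe_le_coe_iff]
        have h2 : ‖z‖ ≤ ‖x‖ + ‖x - z‖ := by
          have := norm_sub_le x (x - z)
          rwa [show x - (x - z) = z by abel] at this
        have := mul_le_mul_of_nonneg_left h2 hρ
        linarith
      exact h1.trans (add_le_add_left (hb z) _)
    intro h
    rw [h, le_bot_iff] at this
    exact EReal.coe_ne_bot _ this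
  have hItop : I ≠ ⊤ := by
    obtain ⟨z, hz⟩ := hex
    refine ne_top_of_le_ne_top ?_ (iInf_le _ z)
    exact (EReal.add_lt_top hz (EReal.coe_ne_top _)).ne
  have h1 : envelope H ρ m x < c ↔ I < c := by
    rw [← EReal.coe_lt_coe_iff, envelope, EReal.coe_toReal hItop hIbot]
  rw [h1, hI, iInf_lt_iff]
  refine exists_congr fun z => ⟨fun h => ?_, fun ⟨r, hr, h⟩ => ?_⟩
  · have hz : H z ≠ ⊤ := by
      intro hz
      rw [hz, EReal.top_add_coe] at h
      exact not_top_lt h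
    refine ⟨(H z).toReal, EReal.le_coe_toReal hz, ?_⟩
    rw [← EReal.coe_toReal hz (hbot z), ← EReal.coe_add, EReal.coe_lt_coe_iff] at h
    exact h
  · refine (add_le_add_left hr _).trans_lt ?_
    rw [← EReal.coe_add, EReal.coe_lt_coe_iff]
    exact h

theorem envelope_le (hρ : 0 ≤ ρ) (hb : ∀ x, ((-(ρ * ‖x‖ + m) : ℝ) : EReal) ≤ H x) (x : E) (r : ℝ)
    (hr : H x ≤ r) : envelope H ρ m x ≤ r + m := by
  have hex : ∃ z, H z ≠ ⊤ := ⟨x, ne_top_of_le_ne_top (EReal.coe_ne_top r) hr⟩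
  refine le_of_forall_gt fun c hc => ?_
  exact (envelope_lt_iff hρ hb hex x c).2 ⟨x, r, hr, by simpa using hc⟩

theorem isLipConvex_envelope [NormedSpace ℝ E] (hρ : 0 ≤ ρ) (hH : ConvexEFn H)
    (hb : ∀ x, ((-(ρ * ‖x‖ + m) : ℝ) : EReal) ≤ H x) : IsLipConvex ρ (envelope H ρ m) := by
  by_cases hex : ∃ z, H z ≠ ⊤
  swap
  · have hzero : ∀ x, envelope H ρ m x = 0 := by
      intro x
      simp only [not_exists, not_not] at hex
      simp only [envelope, hex, EReal.top_add_coe, iInf_const, EReal.toReal_top]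
    refine ⟨fun x y a b _ _ _ => by simp [hzero], by simp [hzero], fun x y => ?_⟩
    simp only [hzero, zero_add]
    positivity
  have key := envelope_lt_iff hρ hb hex
  refine ⟨fun x y a b ha hb' hab => ?_, ?_, fun x y => ?_⟩
  · refine le_of_forall_pos_le_add fun ε hε => ?_
    obtain ⟨z, s, hz, hs⟩ := (key x _).1 (lt_add_of_pos_right _ hε)
    obtain ⟨w, t, hw, ht⟩ := (key y _).1 (lt_add_of_pos_right _ hε)
    have ha' : (0 : EReal) ≤ a := EReal.coe_nonneg.2 ha
    have hb'' : (0 : EReal) ≤ b := EReal.coe_nonneg.2 hb'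
    have h1 : H (a • z + b • w) ≤ ((a * s + b * t : ℝ) : EReal) := by
      refine (hH z w a b ha hb' hab).trans ?_
      rw [EReal.coe_add, EReal.coe_mul, EReal.coe_mul]
      exact add_le_add (mul_le_mul_of_nonneg_left hz ha') (mul_le_mul_of_nonneg_left hw hb'')
    have h2 : ‖a • x + b • y - (a • z + b • w)‖ ≤ a * ‖x - z‖ + b * ‖y - w‖ := by
      rw [show a • x + b • y - (a • z + b • w) = a • (x - z) + b • (y - w) by module]
      refine (norm_add_le _ _).trans ?_
      rw [norm_smul, norm_smul, Real.norm_of_nonneg ha, Real.norm_of_nonneg hb']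
    have h3 := mul_le_mul_of_nonneg_left h2 hρ
    have h4 := mul_le_mul_of_nonneg_left hs.le ha
    have h5 := mul_le_mul_of_nonneg_left ht.le hb'
    refine le_of_forall_gt fun c hc => (key _ c).2 ⟨_, _, h1, lt_of_le_of_lt ?_ hc⟩
    have h6 : a * ε + b * ε = ε := by rw [← add_mul, hab, one_mul]
    have h7 : a * m + b * m = m := by rw [← add_mul, hab, one_mul]
    linarith
  · by_contra! hneg
    obtain ⟨z, r, hz, hr⟩ := (key 0 0).1 hneg
    have := EReal.coe_le_coe_iff.1 ((hb z).trans hz)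
    rw [zero_sub, norm_neg] at hr
    linarith
  · refine le_of_forall_pos_le_add fun ε hε => ?_
    obtain ⟨z, s, hz, hs⟩ := (key y _).1 (lt_add_of_pos_right _ hε)
    refine ((key x _).2 ⟨z, s, hz, ?_⟩).le
    have h1 : ‖x - z‖ ≤ ‖x - y‖ + ‖y - z‖ := norm_sub_le_norm_sub_add_norm_sub x y z
    have h2 := mul_le_mul_of_nonneg_left h1 hρ
    linarith

end Envelope

theorem measurable_envelope [mΩ : MeasurableSpace Ω] (μ : Measure Ω) [IsFiniteMeasure μ]
    [μ.IsComplete] {n : ℕ} {h : EuclideanSpace ℝ (Fin n) → Ω → EReal}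
    (hh : Measurable fun p : EuclideanSpace ℝ (Fin n) × Ω => h p.1 p.2) {ρ m : Ω → ℝ}
    (hρ : Measurable ρ) (hm : Measurable m) (x : EuclideanSpace ℝ (Fin n)) :
    Measurable fun ω => envelope (fun z => h z ω) (ρ ω) (m ω) x := by
  have hF : Measurable fun p : EuclideanSpace ℝ (Fin n) × Ω =>
      h p.1 p.2 + ((ρ p.2 * ‖x - p.1‖ + m p.2 : ℝ) : EReal) := by
    refine hh.add (measurable_coe_real_ereal.comp ?_)
    fun_prop
  exact (measurable_iInf_left μ hF).ereal_toReal

/-! ### Integrals of extended real functions -/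

theorem ePos_le_ofReal {y : EReal} {c : ℝ} (h : y ≤ c) : ePos y ≤ ENNReal.ofReal |c| := by
  have hy : y ≠ ⊤ := ne_top_of_le_ne_top (EReal.coe_ne_top c) h
  rw [ePos, if_neg hy]
  refine ENNReal.ofReal_le_ofReal ?_
  rcases eq_or_ne y ⊥ with rfl | hb
  · simp
  · rw [← EReal.coe_toReal hy hb, EReal.coe_le_coe_iff] at h
    exact h.trans (le_abs_self c)

theorem le_coe_ePos {y : EReal} (h : ePos y ≠ ⊤) : y ≤ ((ePos y).toReal : ℝ) := by
  have hy : y ≠ ⊤ := fun hy => h (by simp [ePos, hy])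
  rw [ePos, if_neg hy]
  refine (EReal.le_coe_toReal hy).trans (EReal.coe_le_coe_iff.2 ?_)
  rw [ENNReal.toReal_ofReal']
  exact le_max_left _ _

theorem measurable_ePos : Measurable ePos := by
  unfold ePos
  exact Measurable.ite (measurableSet_singleton ⊤) measurable_const
    (ENNReal.measurable_ofReal.comp measurable_ereal_toReal)

theorem EInt_ne_top_iff {mΩ : MeasurableSpace Ω} (μ : Measure Ω) (ξ : Ω → EReal) :
    EInt μ ξ ≠ ⊤ ↔ (∫⁻ ω, ePos (ξ ω) ∂μ) ≠ ⊤ := by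
  unfold EInt
  split_ifs with h
  · simp [h]
  · refine iff_of_true ?_ h
    rw [sub_eq_add_neg]
    refine (EReal.add_lt_top ?_ ?_).ne
    · simpa using h
    · rw [Ne, EReal.neg_eq_top_iff]
      exact EReal.coe_ennreal_ne_bot _

/-- Reading an affine minorant as a bound on the conjugate, and conversely. -/
theorem coe_sub_le_iff {y : EReal} (hy : y ≠ ⊥) (a c : ℝ) :
    (a : EReal) - y ≤ c ↔ ((a - c : ℝ) : EReal) ≤ y := by
  induction y with
  | bot => exact absurd rfl hy
  | top => simp
  | coe y =>
    rw [← EReal.coe_sub, EReal.coe_le_coe_iff, EReal.coe_le_coe_iff]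
    constructor <;> intro h <;> linarith

/-- Lemma 2.1: for a convex normal integrand `h` on `ℝⁿ`, L-boundedness,
the existence of an integrable affine minorant, and nonemptiness of `dom E h* ∩ L¹` are
equivalent. -/
theorem statement0 {Ω : Type*} {mΩ : MeasurableSpace Ω} (μ : Measure Ω)
    [IsProbabilityMeasure μ] (hcompl : μ.IsComplete) (n : ℕ)
    (h : EuclideanSpace ℝ (Fin n) → Ω → EReal)
    (hNI : IsNormalIntegrand mΩ h) (hconv : ConvexIntegrand h) :
    List.TFAE
      [LBounded μ h,
       ∃ v : Ω → EuclideanSpace ℝ (Fin n), ∃ m : Ω → ℝ,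
         Integrable v μ ∧ Integrable m μ ∧
         ∀ᵐ ω ∂μ, ∀ x, ((⟪x, v ω⟫ - m ω : ℝ) : EReal) ≤ h x ω,
       ∃ v : Ω → EuclideanSpace ℝ (Fin n), Integrable v μ ∧
         EInt μ (fun ω => ⨆ x : EuclideanSpace ℝ (Fin n),
           ((⟪x, v ω⟫ : ℝ) : EReal) - h x ω) ≠ ⊤] := by
  obtain ⟨hmeas, -, hbot⟩ := hNI
  tfae_have 1 → 2 := by
    rintro ⟨ρ, m, hρi, hmi, hρ0, -, hb⟩
    have hρm : Measurable ρ := aemeasurable_iff_measurable.1 hρi.aemeasurable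
    have hmm : Measurable m := aemeasurable_iff_measurable.1 hmi.aemeasurable
    let A : Set Ω := {ω | ∀ x, ((-(ρ ω * ‖x‖ + m ω) : ℝ) : EReal) ≤ h x ω}
    have hA : MeasurableSet A := by
      have : MeasurableSet Aᶜ := measurableSet_of_null (μ := μ) hb
      exact this.of_compl
    classical
    -- Outside the exceptional null set, `F` is the Pasch–Hausdorff envelope.
    let F : Ω → EuclideanSpace ℝ (Fin n) → ℝ := fun ω x =>
      if ω ∈ A then envelope (fun z => h z ω) (ρ ω) (m ω) x else 0
    have hF : ∀ ω, IsLipConvex (ρ ω) (F ω) := by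
      intro ω
      by_cases hω : ω ∈ A
      · have hFω : F ω = envelope (fun z => h z ω) (ρ ω) (m ω) := by
          funext x
          simp [F, hω]
        rw [hFω]
        exact isLipConvex_envelope (hρ0 ω) (hconv ω) hω
      · have hFω : ∀ x, F ω x = 0 := fun x => by simp [F, hω]
        refine ⟨fun x y a b _ _ _ => by simp [hFω], by simp [hFω], fun x y => ?_⟩
        have := hρ0 ω
        simp only [hFω, zero_add]
        positivity
    have hFm : ∀ x, Measurable fun ω => F ω x := fun x =>
      Measurable.ite hA (measurable_envelope μ hmeas hρm hmm x) measurable_const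
    obtain ⟨v, hv, hvρ, hvF⟩ := exists_measurable_minorant hF hFm hρ0
    refine ⟨v, m, ?_, hmi, ?_⟩
    · refine hρi.mono' hv.aestronglyMeasurable (.of_forall hvρ)
    · filter_upwards [hb] with ω hω x
      rcases eq_or_ne (h x ω) ⊤ with ht | ht
      · rw [ht]; exact le_top
      · have h1 := hvF ω x
        have h2 : F ω x = envelope (fun z => h z ω) (ρ ω) (m ω) x := if_pos hω
        have h3 := envelope_le (hρ0 ω) hω x (h x ω).toReal (EReal.le_coe_toReal ht)
        rw [← EReal.coe_toReal ht (hbot x ω), EReal.coe_le_coe_iff]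
        linarith
  tfae_have 2 → 1 := by
    rintro ⟨v, m, hv, hm, hb⟩
    refine ⟨fun ω => ‖v ω‖, fun ω => |m ω|, hv.norm, hm.abs, fun _ => norm_nonneg _,
      fun _ => abs_nonneg _, ?_⟩
    filter_upwards [hb] with ω hω x
    refine le_trans (EReal.coe_le_coe_iff.2 ?_) (hω x)
    have h1 := neg_le_of_abs_le (abs_real_inner_le_norm x (v ω))
    have h2 := le_abs_self (m ω)
    linarith [mul_comm ‖x‖ ‖v ω‖]
  tfae_have 2 → 3 := by
    rintro ⟨v, m, hv, hm, hb⟩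
    refine ⟨v, hv, (EInt_ne_top_iff _ _).2 (ne_top_of_le_ne_top hm.2.ne ?_)⟩
    refine lintegral_mono_ae ?_
    filter_upwards [hb] with ω hω
    rw [← ofReal_norm, Real.norm_eq_abs]
    exact ePos_le_ofReal (iSup_le fun x => (coe_sub_le_iff (hbot x ω) _ _).2 (hω x))
  tfae_have 3 → 2 := by
    rintro ⟨v, hv, hfin⟩
    rw [EInt_ne_top_iff] at hfin
    have hvm : Measurable v := aemeasurable_iff_measurable.1 hv.aemeasurable
    have hF : Measurable fun p : EuclideanSpace ℝ (Fin n) × Ω =>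
        ((⟪p.1, v p.2⟫ : ℝ) : EReal) - h p.1 p.2 := by
      simp only [sub_eq_add_neg]
      refine Measurable.add (measurable_coe_real_ereal.comp ?_) hmeas.neg
      exact measurable_fst.inner (hvm.comp measurable_snd)
    -- The projection theorem makes the conjugate along `v` measurable.
    have hξ := measurable_ePos.comp (measurable_iSup_left μ hF)
    refine ⟨v, _, hv, integrable_toReal_of_lintegral_ne_top hξ.aemeasurable hfin, ?_⟩
    filter_upwards [ae_lt_top hξ hfin] with ω hω x
    rw [← coe_sub_le_iff (hbot x ω)]
    exact (le_iSup (fun x => ((⟪x, v ω⟫ : ℝ) : EReal) - h x ω) x).trans (le_coe_ePos hω.ne)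
  tfae_finish

end PaperDP
end
end

section
/- Let G ⊆ F be a sub-σ-algebra. Every L-bounded normal integrand h on ℝⁿ admits a G-conditional expectation ĥ, and ĥ can be chosen L-bounded; moreover, if h is a convex normal integrand, then ĥ can be chosen convex as well. -/
/-!
The conditional expectation is built by integrating the integrand against a regular conditional
distribution. No such distribution need exist on `Ω` itself, so the randomness is first transported
to a standard Borel space. Since a jointly measurable function involves only countably many events
of `Ω`, there are a real random variable `φ` and a measurable `H` with `h x ω = H x (φ ω)`
(`exists_factor`). Adjoining measurable versions of the two functions `ρ`, `m` in the lower bound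
gives a random element `Φ` of `ℝ × ℝ × ℝ`.

For parameters outside the range of `Φ` the function `H · y` may fail to be lower semicontinuous,
convex or bounded below. The set of such parameters is analytic, being a projection of a Borel set,
and its preimage under `Φ` is null. Analytic sets are inner regular for compact sets
(`analytic_inner`), so it is null for the law of `Φ` and `H` may be changed to zero on a Borel null
set containing it (`exists_representation`). This way neither a measurable projection theorem for
`Ω` nor the theory of measurable selections is needed.

Let `κ` be the conditional law of `Φ` given `G`, set to zero on a `G`-measurable null set so that
the lower bound is `κ`-integrable for every value of the condition (`exists_kernel`). The conditional
integrand is `∫ H x y κ(dy)`, interpreted as the integral of the nonnegative function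
`H x y + c x y` minus that of the finite function `c x y = |ρ| ‖x‖ + |m|`. Lower semicontinuity is
Fatou's lemma, convexity is monotonicity of the integral, and the lower bound follows from
nonnegativity of the first term; its coefficients are the conditional means of `ρ` and `m`, hence
integrable. The defining identity follows from disintegration of the positive and the
negative part; the latter has a finite conditional integral by the lower bound, and
quasi-integrability makes one of the two total integrals finite (`EInt_sub`).
-/

open MeasureTheory ENNReal
open scoped RealInnerProductSpace

noncomputable section

namespace PaperDP

variable {Ω : Type*}

open Filter Topology

/-! ### Inner regularity of analytic sets -/

/-- Analytic sets are inner regular with respect to compact sets: an analytic set of outer measure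
greater than `c` contains a compact set of measure at least `c`. -/
theorem analytic_inner {Y : Type*} [TopologicalSpace Y] [PolishSpace Y] [MeasurableSpace Y]
    [BorelSpace Y] (ν : Measure Y) [IsFiniteMeasure ν] {A : Set Y} (hA : AnalyticSet A)
    {c : ℝ≥0∞} (hc : c < ν A) : ∃ K ⊆ A, IsCompact K ∧ c ≤ ν K := by
  rw [AnalyticSet] at hA
  obtain rfl | ⟨f, hf, rfl⟩ := hA
  · simp at hc
  -- Write `A` as the image of Baire space and bound the coordinates one after another, keeping the
  -- outer measure of the image above `c`.
  have step : ∀ (s : Set (ℕ → ℕ)) (k : ℕ), c < ν (f '' s) →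
      ∃ m, c < ν (f '' (s ∩ {σ | σ k ≤ m})) := by
    intro s k hs
    have hmono : Monotone fun m : ℕ => f '' (s ∩ {σ | σ k ≤ m}) := fun m m' hm =>
      Set.image_mono (Set.inter_subset_inter_right _ fun σ (hσ : σ k ≤ m) => hσ.trans hm)
    have hun : f '' s = ⋃ m : ℕ, f '' (s ∩ {σ | σ k ≤ m}) := by
      rw [← Set.image_iUnion, ← Set.inter_iUnion]
      congr 1
      symm
      rw [Set.inter_eq_left]
      intro σ _
      exact Set.mem_iUnion.2 ⟨σ k, le_refl (σ k)⟩
    rw [hun, hmono.measure_iUnion] at hs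
    exact lt_iSup_iff.1 hs
  choose! g hg using step
  let S : ℕ → Set (ℕ → ℕ) := fun k =>
    Nat.rec Set.univ (fun k s => s ∩ {σ | σ k ≤ g s k}) k
  let b : ℕ → ℕ := fun k => g (S k) k
  have hS : ∀ k, c < ν (f '' S k) := by
    intro k
    induction k with
    | zero => simpa [S] using hc
    | succ k ih => exact hg (S k) k ih
  have hSb : ∀ k, ∀ σ ∈ S k, ∀ i < k, σ i ≤ b i := by
    intro k
    induction k with
    | zero => simp
    | succ k ih =>
      rintro σ ⟨h1, h2⟩ i hi
      rcases Nat.lt_succ_iff_lt_or_eq.1 hi with h | rfl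
      · exact ih σ h1 i h
      · exact h2
  -- The bounds found for the coordinates determine a compact box.
  let C : Set (ℕ → ℕ) := Set.univ.pi fun i => Set.Iic (b i)
  have hC : IsCompact C := isCompact_univ_pi fun i => (Set.finite_Iic (b i)).isCompact
  refine ⟨f '' C, Set.image_subset_range f C, hC.image hf, ?_⟩
  -- By outer regularity, it suffices to bound the measure of every open `U ⊇ f '' C` from below. Such
  -- a `U` contains `f '' S k` for some `k`: otherwise there are points `σ k ∈ S k` outside `f ⁻¹' U`.
  -- Their truncations to the box accumulate at some `τ` in the box, hence so do the points `σ k`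
  -- themselves, although `f ⁻¹' U` is an open neighbourhood of `τ`.
  rw [Set.measure_eq_iInf_isOpen]
  refine le_iInf₂ fun U hU => le_iInf fun hUo => ?_
  obtain ⟨k, hk⟩ : ∃ k, S k ⊆ f ⁻¹' U := by
    by_contra! hcon
    simp only [Set.not_subset] at hcon
    choose σ hσ hσU using hcon
    have hτ : ∀ k, (fun i => min (σ k i) (b i)) ∈ C := fun k i _ =>
      min_le_right (σ k i) (b i)
    obtain ⟨τ, hτC, φ, hφ, hlim⟩ := hC.isSeqCompact hτ
    -- For fixed `i`, truncation leaves coordinate `i` of `σ k` unchanged as soon as `k > i`.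
    have hlim' : Tendsto (fun j => σ (φ j)) atTop (𝓝 τ) := by
      rw [tendsto_pi_nhds] at hlim ⊢
      intro i
      refine (hlim i).congr' ?_
      filter_upwards [hφ.tendsto_atTop.eventually_gt_atTop i] with j hj
      exact min_eq_left (hSb _ _ (hσ _) i hj)
    obtain ⟨j, hj⟩ := (hlim'.eventually
      ((hUo.preimage hf).mem_nhds (hU (Set.mem_image_of_mem f hτC)))).exists
    exact hσU _ hj
  exact (hS k).le.trans (measure_mono (Set.image_subset_iff.2 hk))

/-- The set `Φ ⁻¹' A` need not be measurable, nor is `A` Borel, so this does not follow from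
`Measure.map_apply`; it does follow for compact subsets of `A`, and these exhaust `A` in measure. -/
theorem null_of_analytic {Ω Y : Type*} [MeasurableSpace Ω] [TopologicalSpace Y] [PolishSpace Y]
    [MeasurableSpace Y] [BorelSpace Y] (μ : Measure Ω) [IsFiniteMeasure μ] {Φ : Ω → Y}
    (hΦ : Measurable Φ) {A : Set Y} (hA : AnalyticSet A) (h0 : μ (Φ ⁻¹' A) = 0) :
    μ.map Φ A = 0 := by
  by_contra hne
  obtain ⟨c, hc0, hc⟩ := exists_between (pos_iff_ne_zero.2 hne)
  obtain ⟨K, hKA, hK, hcK⟩ := analytic_inner (μ.map Φ) hA hc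
  rw [Measure.map_apply hΦ hK.measurableSet, measure_mono_null (Set.preimage_mono hKA) h0] at hcK
  exact absurd hcK (not_le.2 hc0)

/-! ### Factorization of a jointly measurable function through a real random variable -/

/-- Countably many real random variables are measurable functions of a single one, because
`ℕ → ℝ` is Borel isomorphic to `ℝ`. -/
theorem exists_merge {Ω : Type*} [MeasurableSpace Ω] (φ : ℕ → Ω → ℝ) (hφ : ∀ i, Measurable (φ i)) :
    ∃ (ψ : Ω → ℝ) (p : ℕ → ℝ → ℝ), Measurable ψ ∧ (∀ i, Measurable (p i)) ∧
      ∀ i ω, φ i ω = p i (ψ ω) := by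
  have h1 : ¬ Countable (ℕ → ℝ) := by
    intro h
    have : Countable ℝ := (Function.const_injective (α := ℕ) (β := ℝ)).countable
    exact not_countable (α := ℝ) this
  let e : (ℕ → ℝ) ≃ᵐ ℝ := PolishSpace.measurableEquivOfNotCountable h1 (not_countable (α := ℝ))
  refine ⟨fun ω => e fun i => φ i ω, fun i t => e.symm t i, ?_, ?_, ?_⟩
  · exact e.measurable.comp (measurable_pi_lambda _ hφ)
  · exact fun i => (measurable_pi_apply i).comp e.symm.measurable
  · simp

/-- A set in the product σ-algebra is determined by countably many rectangles, so its dependence on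
`ω` passes through a real random variable. -/
theorem exists_factor_set {E Ω : Type*} [MeasurableSpace E] [MeasurableSpace Ω] (S : Set (E × Ω))
    (hS : MeasurableSet S) : ∃ (φ : Ω → ℝ) (T : Set (E × ℝ)), Measurable φ ∧ MeasurableSet T ∧
      S = (fun p : E × Ω => (p.1, φ p.2)) ⁻¹' T := by
  rw [← generateFrom_prod] at hS
  induction S, hS using MeasurableSpace.generateFrom_induction with
  | hC t ht _ =>
    obtain ⟨A, hA, B, hB, rfl⟩ := ht
    classical
    refine ⟨B.indicator 1, A ×ˢ {1}, measurable_one.indicator hB,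
      hA.prod (measurableSet_singleton 1), ?_⟩
    ext ⟨x, ω⟩
    by_cases h : ω ∈ B <;> simp [h]
  | empty => exact ⟨0, ∅, measurable_zero, .empty, rfl⟩
  | compl t _ ih =>
    obtain ⟨φ, T, hφ, hT, rfl⟩ := ih
    exact ⟨φ, Tᶜ, hφ, hT.compl, rfl⟩
  | iUnion s _ ih =>
    choose φ T hφ hT hs using ih
    obtain ⟨ψ, p, hψ, hp, hpψ⟩ := exists_merge φ hφ
    refine ⟨ψ, ⋃ i, (fun q : E × ℝ => (q.1, p i q.2)) ⁻¹' T i, hψ, ?_, ?_⟩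
    · refine MeasurableSet.iUnion fun i => hT i |>.preimage ?_
      exact measurable_fst.prodMk ((hp i).comp measurable_snd)
    · rw [Set.preimage_iUnion]
      refine Set.iUnion_congr fun i => ?_
      rw [hs i]
      ext ⟨x, ω⟩
      simp [hpψ]

/-- A jointly measurable function depends on `ω` only through a real random variable. This reduces
questions about an arbitrary measurable space `Ω` to a standard Borel parameter space. -/
theorem exists_factor {E Ω : Type*} [MeasurableSpace E] [MeasurableSpace Ω] (f : E × Ω → EReal)
    (hf : Measurable f) : ∃ (φ : Ω → ℝ) (H : E × ℝ → EReal), Measurable φ ∧ Measurable H ∧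
      ∀ x ω, f (x, ω) = H (x, φ ω) := by
  have hB : ∀ i, MeasurableSet (f ⁻¹' MeasurableSpace.natGeneratingSequence EReal i) := fun i =>
    hf (MeasurableSpace.measurableSet_natGeneratingSequence i)
  choose φ T hφ hT hs using fun i => exists_factor_set _ (hB i)
  obtain ⟨ψ, p, hψ, hp, hpψ⟩ := exists_merge φ hφ
  have key : Measurable[MeasurableSpace.comap (fun q : E × Ω => (q.1, ψ q.2)) inferInstance] f := by
    rw [← MeasurableSpace.generateFrom_natGeneratingSequence EReal]
    refine @measurable_generateFrom _ _ (_) _ _ ?_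
    rintro _ ⟨i, rfl⟩
    refine ⟨(fun q : E × ℝ => (q.1, p i q.2)) ⁻¹' T i, (hT i).preimage ?_, ?_⟩
    · exact measurable_fst.prodMk ((hp i).comp measurable_snd)
    · rw [hs i]
      ext ⟨x, ω⟩
      simp [hpψ]
  -- the Doob–Dynkin factorization lemma
  obtain ⟨H, hH, hfH⟩ := key.exists_eq_measurable_comp
  exact ⟨ψ, H, hψ, hH, fun x ω => by rw [hfH]; rfl⟩

/-! ### Representation of the integrand over a standard Borel parameter space -/

theorem analyticSet_proj {Z Y : Type*} [TopologicalSpace Z] [PolishSpace Z] [MeasurableSpace Z]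
    [BorelSpace Z] [TopologicalSpace Y] [PolishSpace Y] [MeasurableSpace Y] [BorelSpace Y]
    {S : Set (Z × Y)} (hS : MeasurableSet S) : AnalyticSet {y | ∃ z, (z, y) ∈ S} := by
  have : {y | ∃ z, (z, y) ∈ S} = Prod.snd '' S := by ext y; simp
  rw [this]
  exact hS.analyticSet_image measurable_snd

section Analytic

variable {E Y : Type*} [NormedAddCommGroup E] [PolishSpace E] [MeasurableSpace E]
    [BorelSpace E] [TopologicalSpace Y] [PolishSpace Y] [MeasurableSpace Y] [BorelSpace Y]
    {H : E × Y → EReal}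

/-- Lower semicontinuity fails at `x` exactly when, for some rational `q < H (x, y)`, a sequence
tends to `x` along which `H (·, y) ≤ q`; this is a Borel condition on the point and the sequence. -/
theorem analyticSet_not_lsc (hH : Measurable H) :
    AnalyticSet {y | ¬ LowerSemicontinuous fun x => H (x, y)} := by
  have hset : {y | ¬ LowerSemicontinuous fun x => H (x, y)} = ⋃ q : ℚ,
      {y | ∃ z : E × (ℕ → E), (z, y) ∈ {p : (E × (ℕ → E)) × Y |
        (∀ k : ℕ, dist (p.1.2 k) p.1.1 < 1 / ((k : ℝ) + 1) ∧
          H (p.1.2 k, p.2) ≤ ((q : ℝ) : EReal)) ∧ ((q : ℝ) : EReal) < H (p.1.1, p.2)}} := by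
    ext y
    simp only [Set.mem_ofPred_eq, Set.mem_iUnion, Prod.exists]
    constructor
    · intro hy
      obtain ⟨x, c, hc, hev⟩ : ∃ x, ∃ c < H (x, y), ¬ ∀ᶠ x' in 𝓝 x, c < H (x', y) := by
        by_contra! hcon
        exact hy hcon
      obtain ⟨q, hcq, hqx⟩ := EReal.exists_rat_btwn_of_lt hc
      have hk : ∀ k : ℕ, ∃ u, dist u x < 1 / ((k : ℝ) + 1) ∧ H (u, y) ≤ c := by
        intro k
        by_contra! hcon
        exact hev (Metric.eventually_nhds_iff.2
          ⟨1 / ((k : ℝ) + 1), Nat.one_div_pos_of_nat, fun u hu => hcon u hu⟩)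
      choose u hu1 hu2 using hk
      exact ⟨q, x, u, fun k => ⟨hu1 k, (hu2 k).trans hcq.le⟩, hqx⟩
    · rintro ⟨q, x, u, hu, hq⟩ hlsc
      obtain ⟨ε, hε, hball⟩ := Metric.eventually_nhds_iff.1 (hlsc x _ hq)
      obtain ⟨k, hk⟩ := exists_nat_one_div_lt hε
      exact absurd (hball ((hu k).1.trans hk)) (not_lt.2 (hu k).2)
  rw [hset]
  refine AnalyticSet.iUnion fun q => analyticSet_proj ?_
  refine MeasurableSet.inter (s₁ := {p : (E × (ℕ → E)) × Y | ∀ k : ℕ,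
    dist (p.1.2 k) p.1.1 < 1 / ((k : ℝ) + 1) ∧ H (p.1.2 k, p.2) ≤ ((q : ℝ) : EReal)}) ?_ ?_
  · rw [Set.ofPred_forall]
    refine MeasurableSet.iInter fun k => MeasurableSet.inter ?_ ?_
    · have h1 : Measurable fun p : (E × (ℕ → E)) × Y => p.1.2 k := by fun_prop
      exact measurableSet_lt (h1.dist (by fun_prop)) measurable_const
    · have h1 : Measurable fun p : (E × (ℕ → E)) × Y => (p.1.2 k, p.2) := by fun_prop
      exact measurableSet_le (hH.comp h1) measurable_const
  · have h1 : Measurable fun p : (E × (ℕ → E)) × Y => (p.1.1, p.2) := by fun_prop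
    exact measurableSet_lt measurable_const (hH.comp h1)

theorem analyticSet_not_le {L : E × Y → EReal} (hL : Measurable L) (hH : Measurable H) :
    AnalyticSet {y | ¬ ∀ x, L (x, y) ≤ H (x, y)} := by
  have hset : {y | ¬ ∀ x, L (x, y) ≤ H (x, y)} = {y | ∃ x, (x, y) ∈ {p | H p < L p}} := by
    ext y; simp
  rw [hset]
  exact analyticSet_proj (measurableSet_lt hH hL)

theorem analyticSet_not_convex [NormedSpace ℝ E] (hH : Measurable H) :
    AnalyticSet {y | ¬ ConvexEFn fun x => H (x, y)} := by
  have hset : {y | ¬ ConvexEFn fun x => H (x, y)} =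
      {y | ∃ z : (E × E) × (ℝ × ℝ), (z, y) ∈ {p : ((E × E) × (ℝ × ℝ)) × Y |
        (0 ≤ p.1.2.1 ∧ 0 ≤ p.1.2.2 ∧ p.1.2.1 + p.1.2.2 = 1) ∧
        (p.1.2.1 : EReal) * H (p.1.1.1, p.2) + (p.1.2.2 : EReal) * H (p.1.1.2, p.2) <
          H (p.1.2.1 • p.1.1.1 + p.1.2.2 • p.1.1.2, p.2)}} := by
    ext y
    simp only [ConvexEFn, Set.mem_ofPred_eq, Prod.exists, not_forall, not_le]
    constructor
    · rintro ⟨x, x', a, b, ha, hb, hab, h⟩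
      exact ⟨x, x', a, b, ⟨ha, hb, hab⟩, h⟩
    · rintro ⟨x, x', a, b, ⟨ha, hb, hab⟩, h⟩
      exact ⟨x, x', a, b, ha, hb, hab, h⟩
  rw [hset]
  have ha : Measurable fun p : ((E × E) × (ℝ × ℝ)) × Y => p.1.2.1 := by fun_prop
  have hb : Measurable fun p : ((E × E) × (ℝ × ℝ)) × Y => p.1.2.2 := by fun_prop
  have h1 : Measurable fun p : ((E × E) × (ℝ × ℝ)) × Y => (p.1.1.1, p.2) := by fun_prop
  have h2 : Measurable fun p : ((E × E) × (ℝ × ℝ)) × Y => (p.1.1.2, p.2) := by fun_prop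
  have h3 : Measurable fun p : ((E × E) × (ℝ × ℝ)) × Y =>
      (p.1.2.1 • p.1.1.1 + p.1.2.2 • p.1.1.2, p.2) := by fun_prop
  exact analyticSet_proj (((measurableSet_le measurable_const ha).inter
    ((measurableSet_le measurable_const hb).inter
      (measurableSet_eq_fun (ha.add hb) measurable_const))).inter
    (measurableSet_lt ((ha.coe_real_ereal.mul (hH.comp h1)).add
      (hb.coe_real_ereal.mul (hH.comp h2))) (hH.comp h3)))

end Analytic

/-- An L-bounded normal integrand coincides, almost surely, with `H x (Φ ω)` for a random element `Φ`
of `ℝ × ℝ × ℝ` and an integrand `H` that is lower semicontinuous, bounded below, and convex if `h`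
is, for *every* value of the parameter. The last two coordinates of `Φ` are measurable versions of
the functions `ρ` and `m` from the L-boundedness of `h`, so that the bound for `H` is explicit. -/
theorem exists_representation {E : Type*} [NormedAddCommGroup E] [NormedSpace ℝ E] [PolishSpace E]
    [MeasurableSpace E] [BorelSpace E] {mΩ : MeasurableSpace Ω} (μ : Measure Ω)
    [IsProbabilityMeasure μ] (h : E → Ω → EReal) (hNI : IsNormalIntegrand mΩ h)
    (hLB : LBounded μ h) :
    ∃ (Φ : Ω → ℝ × ℝ × ℝ) (H : E → ℝ × ℝ × ℝ → EReal), Measurable Φ ∧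
      Measurable (fun p : E × (ℝ × ℝ × ℝ) => H p.1 p.2) ∧
      (∀ y, LowerSemicontinuous fun x => H x y) ∧
      (∀ x y, (↑(-(|y.2.1| * ‖x‖ + |y.2.2|)) : EReal) ≤ H x y) ∧
      (ConvexIntegrand h → ConvexIntegrand H) ∧
      (∀ᵐ ω ∂μ, ∀ x, h x ω = H x (Φ ω)) ∧
      Integrable (fun ω => |(Φ ω).2.1|) μ ∧ Integrable (fun ω => |(Φ ω).2.2|) μ := by
  obtain ⟨ρ, m, hρ, hm, hρ0, hm0, hle⟩ := hLB
  obtain ⟨hmeas, hlsc, -⟩ := hNI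
  obtain ⟨φ, H₀, hφ, hH₀, hfac⟩ := exists_factor (fun p : E × Ω => h p.1 p.2) hmeas
  let r := hρ.aestronglyMeasurable.mk ρ
  let s := hm.aestronglyMeasurable.mk m
  have hr : Measurable r := hρ.aestronglyMeasurable.stronglyMeasurable_mk.measurable
  have hs : Measurable s := hm.aestronglyMeasurable.stronglyMeasurable_mk.measurable
  have hρr : ρ =ᵐ[μ] r := hρ.aestronglyMeasurable.ae_eq_mk
  have hms : m =ᵐ[μ] s := hm.aestronglyMeasurable.ae_eq_mk
  let Φ : Ω → ℝ × ℝ × ℝ := fun ω => (φ ω, r ω, s ω)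
  have hΦ : Measurable Φ := hφ.prodMk (hr.prodMk hs)
  let H₁ : E × (ℝ × ℝ × ℝ) → EReal := fun p => H₀ (p.1, p.2.1)
  have hH₁ : Measurable H₁ := hH₀.comp (by fun_prop)
  have hfac₁ : ∀ x ω, h x ω = H₁ (x, Φ ω) := hfac
  let L : E × (ℝ × ℝ × ℝ) → EReal := fun p => ↑(-(|p.2.2.1| * ‖p.1‖ + |p.2.2.2|))
  have hL : Measurable L := by
    apply Measurable.coe_real_ereal
    have h1 : Measurable fun p : E × (ℝ × ℝ × ℝ) => ‖p.1‖ := measurable_fst.norm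
    have h2 : Measurable fun p : E × (ℝ × ℝ × ℝ) => |p.2.2.1| := by
      have : Measurable fun p : E × (ℝ × ℝ × ℝ) => p.2.2.1 := by fun_prop
      exact this.abs
    have h3 : Measurable fun p : E × (ℝ × ℝ × ℝ) => |p.2.2.2| := by
      have : Measurable fun p : E × (ℝ × ℝ × ℝ) => p.2.2.2 := by fun_prop
      exact this.abs
    exact ((h2.mul h1).add h3).neg
  -- The good properties of `H₁ (·, y)` hold for `y` in the range of `Φ` up to a null set, but that
  -- range is not measurable in general. The exceptional parameters form analytic sets, null for the
  -- law of `Φ`, hence lie in a Borel null set `B`.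
  obtain ⟨B, hB, hBnull, hB1, hB2, hB3⟩ : ∃ B : Set (ℝ × ℝ × ℝ), MeasurableSet B ∧
      μ (Φ ⁻¹' B) = 0 ∧ (∀ y ∉ B, LowerSemicontinuous fun x => H₁ (x, y)) ∧
      (∀ y ∉ B, ∀ x, L (x, y) ≤ H₁ (x, y)) ∧
      (ConvexIntegrand h → ∀ y ∉ B, ConvexEFn fun x => H₁ (x, y)) := by
    let B₁ : Set (ℝ × ℝ × ℝ) := {y | ¬ LowerSemicontinuous fun x => H₁ (x, y)}
    let B₂ : Set (ℝ × ℝ × ℝ) := {y | ¬ ∀ x, L (x, y) ≤ H₁ (x, y)}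
    let B₃ : Set (ℝ × ℝ × ℝ) := {y | ¬ (ConvexIntegrand h → ConvexEFn fun x => H₁ (x, y))}
    have h1 : μ.map Φ B₁ = 0 := by
      refine null_of_analytic μ hΦ (analyticSet_not_lsc hH₁) ?_
      convert measure_empty (μ := μ)
      ext ω
      simpa only [B₁, Set.mem_preimage, Set.mem_ofPred_eq, not_not, Set.mem_empty_iff_false,
        iff_false, ← hfac₁] using hlsc ω
    have h2 : μ.map Φ B₂ = 0 := by
      refine null_of_analytic μ hΦ (analyticSet_not_le hL hH₁) ?_
      have : ∀ᵐ ω ∂μ, ∀ x, L (x, Φ ω) ≤ H₁ (x, Φ ω) := by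
        filter_upwards [hle, hρr, hms] with ω h1 h2 h3 x
        have := h1 x
        rw [← hfac₁]
        simpa only [L, Φ, ← h2, ← h3, abs_of_nonneg (hρ0 ω), abs_of_nonneg (hm0 ω)] using this
      exact this
    have h3 : μ.map Φ B₃ = 0 := by
      by_cases hc : ConvexIntegrand h
      · have : B₃ = {y | ¬ ConvexEFn fun x => H₁ (x, y)} := by ext y; simp [B₃, hc]
        rw [this]
        refine null_of_analytic μ hΦ (analyticSet_not_convex hH₁) ?_
        convert measure_empty (μ := μ)
        ext ω
        simpa only [Set.mem_preimage, Set.mem_ofPred_eq, not_not, Set.mem_empty_iff_false,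
          iff_false, ← hfac₁] using hc ω
      · have : B₃ = ∅ := by ext y; simp [B₃, hc]
        rw [this, measure_empty]
    have hsub := subset_toMeasurable (μ.map Φ) (B₁ ∪ B₂ ∪ B₃)
    refine ⟨toMeasurable (μ.map Φ) (B₁ ∪ B₂ ∪ B₃), measurableSet_toMeasurable _ _, ?_,
      fun y hy => ?_, fun y hy => ?_, fun hc y hy => ?_⟩
    · rw [← Measure.map_apply hΦ (measurableSet_toMeasurable _ _), measure_toMeasurable,
        measure_union_null_iff, measure_union_null_iff]
      exact ⟨⟨h1, h2⟩, h3⟩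
    · by_contra hcon
      exact hy (hsub (Or.inl (Or.inl hcon)))
    · by_contra hcon
      exact hy (hsub (Or.inl (Or.inr hcon)))
    · by_contra hcon
      exact hy (hsub (Or.inr fun h' => hcon (h' hc)))
  classical
  -- On `B` the integrand is replaced by zero, which has all the required properties.
  refine ⟨Φ, fun x y => if y ∈ B then 0 else H₁ (x, y), hΦ, ?_, fun y => ?_, fun x y => ?_,
    fun hc y => ?_, ?_, ?_, ?_⟩
  · exact Measurable.ite (hB.preimage measurable_snd) measurable_const hH₁
  · by_cases hy : y ∈ B
    · simpa [hy] using lowerSemicontinuous_const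
    · simpa [hy] using hB1 y hy
  · by_cases hy : y ∈ B
    · simp only [hy, if_true]
      exact_mod_cast neg_nonpos.2 (by positivity)
    · simp only [hy, if_false]
      exact hB2 y hy x
  · by_cases hy : y ∈ B
    · simp [hy, ConvexEFn]
    · simpa [hy] using hB3 hc y hy
  · have : ∀ᵐ ω ∂μ, Φ ω ∉ B := by
      rw [ae_iff]
      simp only [not_not]
      exact hBnull
    filter_upwards [this] with ω hω x
    simp [hω, hfac₁]
  · exact (hρ.congr hρr).abs
  · exact (hm.congr hms).abs

/-! ### Arithmetic of extended reals and the extended integral -/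

theorem ePos_eq_toENNReal (v : EReal) : ePos v = v.toENNReal := by
  unfold ePos EReal.toENNReal
  congr

/-- The identity `(v + c)⁺ + v⁻ = v⁺ + c` for `v ≥ -c`, which is free of subtraction and can
therefore be integrated in `ℝ≥0∞`. -/
theorem toENNReal_shift {v : EReal} {c : ℝ} (hc : 0 ≤ c) (h : ((-c : ℝ) : EReal) ≤ v) :
    (v + c).toENNReal + (-v).toENNReal = v.toENNReal + ENNReal.ofReal c := by
  induction v with
  | bot => simp at h
  | top => simp
  | coe v =>
    have h' : -c ≤ v := by exact_mod_cast h
    rw [← EReal.coe_add, ← EReal.coe_neg]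
    simp only [EReal.real_coe_toENNReal]
    rcases le_total 0 v with hv | hv
    · rw [ENNReal.ofReal_of_nonpos (neg_nonpos.2 hv), add_zero, ENNReal.ofReal_add hv hc]
    · rw [ENNReal.ofReal_of_nonpos hv, zero_add,
        ← ENNReal.ofReal_add (by linarith) (neg_nonneg.2 hv)]
      congr 1; ring

/-- Converse bookkeeping to `toENNReal_shift`: after integration of that identity, it recovers the
equality of the two differences in `EReal`. -/
theorem coe_sub_eq_sub {k N P : ℝ≥0∞} {c : ℝ} (hc : 0 ≤ c) (hN : N ≠ ⊤)
    (h : k + N = P + ENNReal.ofReal c) : (k : EReal) - (c : EReal) = (P : EReal) - (N : EReal) := by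
  lift N to NNReal using hN
  lift c to NNReal using hc
  rw [ENNReal.ofReal_coe_nnreal] at h
  induction k with
  | top =>
    have hP : P = ⊤ := by
      by_contra hP
      rw [top_add] at h
      exact ENNReal.add_ne_top.2 ⟨hP, ENNReal.coe_ne_top⟩ h.symm
    subst hP
    rfl
  | coe k =>
    have hP : P ≠ ⊤ := by
      rintro rfl
      rw [top_add] at h
      exact ENNReal.add_ne_top.2 ⟨ENNReal.coe_ne_top, ENNReal.coe_ne_top⟩ h
    lift P to NNReal using hP
    have h' : (k : ℝ) + N = P + c := by exact_mod_cast h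
    change ((k : ℝ) : EReal) - ((c : ℝ) : EReal) = ((P : ℝ) : EReal) - ((N : ℝ) : EReal)
    rw [← EReal.coe_sub, ← EReal.coe_sub]
    congr 1
    linarith

theorem toENNReal_sub_add (A : ℝ≥0∞) {B : ℝ≥0∞} (hB : B ≠ ⊤) :
    ((A : EReal) - B).toENNReal + B = (-((A : EReal) - B)).toENNReal + A := by
  lift B to NNReal using hB
  induction A with
  | top =>
    change ((⊤ : EReal) - ((B : ℝ) : EReal)).toENNReal + B =
      (-((⊤ : EReal) - ((B : ℝ) : EReal))).toENNReal + ⊤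
    simp
  | coe A =>
    change (((A : ℝ) : EReal) - ((B : ℝ) : EReal)).toENNReal + B =
      (-(((A : ℝ) : EReal) - ((B : ℝ) : EReal))).toENNReal + A
    rw [← EReal.coe_sub, ← EReal.coe_neg]
    simp only [EReal.real_coe_toENNReal]
    rw [← ENNReal.ofReal_coe_nnreal (p := B), ← ENNReal.ofReal_coe_nnreal (p := A)]
    rcases le_total (A : ℝ) B with h | h
    · rw [ENNReal.ofReal_of_nonpos (sub_nonpos.2 h), zero_add,
        ← ENNReal.ofReal_add (by linarith) A.coe_nonneg]
      congr 1; ring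
    · rw [ENNReal.ofReal_of_nonpos (by linarith : -((A : ℝ) - B) ≤ 0), zero_add,
        ← ENNReal.ofReal_add (by linarith) B.coe_nonneg]
      congr 1; ring

/-- The extended integral of a difference of nonnegative functions can be computed from any such
decomposition with `B` finite and one of the two integrals finite, not only from the positive and
negative parts. -/
theorem EInt_sub {mΩ : MeasurableSpace Ω} (μ : Measure Ω) {A B : Ω → ℝ≥0∞} (hA : Measurable A)
    (hB : Measurable B) (hBtop : ∀ ω, B ω ≠ ⊤)
    (hfin : ∫⁻ ω, A ω ∂μ ≠ ⊤ ∨ ∫⁻ ω, B ω ∂μ ≠ ⊤) :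
    EInt μ (fun ω => (A ω : EReal) - (B ω : EReal)) = if ∫⁻ ω, A ω ∂μ = ⊤ then ⊤
      else ((∫⁻ ω, A ω ∂μ : ℝ≥0∞) : EReal) - ((∫⁻ ω, B ω ∂μ : ℝ≥0∞) : EReal) := by
  simp only [EInt, ePos_eq_toENNReal]
  set F := ∫⁻ ω, ((A ω : EReal) - (B ω : EReal)).toENNReal ∂μ with hF
  set N := ∫⁻ ω, (-((A ω : EReal) - (B ω : EReal))).toENNReal ∂μ with hN
  have hsum : F + ∫⁻ ω, B ω ∂μ = N + ∫⁻ ω, A ω ∂μ := by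
    rw [hF, hN, ← lintegral_add_right _ hB, ← lintegral_add_right _ hA]
    exact lintegral_congr fun ω => toENNReal_sub_add (A ω) (hBtop ω)
  have hFA : F ≤ ∫⁻ ω, A ω ∂μ := by
    refine lintegral_mono fun ω => ?_
    calc ((A ω : EReal) - (B ω : EReal)).toENNReal ≤ (A ω : EReal).toENNReal := by
          apply EReal.toENNReal_le_toENNReal
          apply EReal.sub_le_of_le_add
          exact le_add_of_nonneg_right (EReal.coe_ennreal_nonneg _)
      _ = A ω := EReal.toENNReal_coe
  have hNB : N ≤ ∫⁻ ω, B ω ∂μ := by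
    refine lintegral_mono fun ω => ?_
    calc (-((A ω : EReal) - (B ω : EReal))).toENNReal ≤ (B ω : EReal).toENNReal := by
          apply EReal.toENNReal_le_toENNReal
          rw [EReal.neg_sub (by simp) (by simp [hBtop])]
          rw [add_comm, ← sub_eq_add_neg]
          apply EReal.sub_le_of_le_add
          exact le_add_of_nonneg_right (EReal.coe_ennreal_nonneg _)
      _ = B ω := EReal.toENNReal_coe
  by_cases hAtop : ∫⁻ ω, A ω ∂μ = ⊤
  · have hBf : ∫⁻ ω, B ω ∂μ ≠ ⊤ := hfin.resolve_left (not_not.2 hAtop)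
    have : F = ⊤ := by
      by_contra hne
      rw [hAtop, add_top] at hsum
      exact ENNReal.add_ne_top.2 ⟨hne, hBf⟩ hsum
    rw [if_pos this, if_pos hAtop]
  · have hFf : F ≠ ⊤ := ne_top_of_le_ne_top hAtop hFA
    rw [if_neg hFf, if_neg hAtop]
    generalize (∫⁻ ω, A ω ∂μ) = a at *
    generalize (∫⁻ ω, B ω ∂μ) = b at *
    by_cases hBtop' : b = ⊤
    · have : N = ⊤ := by
        by_contra hne
        rw [hBtop', add_top] at hsum
        exact ENNReal.add_ne_top.2 ⟨hne, hAtop⟩ hsum.symm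
      rw [this, hBtop', EReal.coe_ennreal_top, EReal.sub_top, EReal.sub_top]
    · have hNf : N ≠ ⊤ := ne_top_of_le_ne_top hBtop' hNB
      clear_value F N
      lift F to NNReal using hFf
      lift N to NNReal using hNf
      lift a to NNReal using hAtop
      lift b to NNReal using hBtop'
      have h' : (F : ℝ) + b = N + a := by exact_mod_cast hsum
      change ((F : ℝ) : EReal) - ((N : ℝ) : EReal) = ((a : ℝ) : EReal) - ((b : ℝ) : EReal)
      rw [← EReal.coe_sub, ← EReal.coe_sub]
      congr 1
      linarith

theorem coe_mul_sub {a c : ℝ} (ha : 0 ≤ a) (k : ℝ≥0∞) :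
    (a : EReal) * ((k : EReal) - (c : EReal)) =
      ((ENNReal.ofReal a * k : ℝ≥0∞) : EReal) - ((a * c : ℝ) : EReal) := by
  rw [EReal.mul_sub_of_nonneg_of_ne_top (by exact_mod_cast ha) (EReal.coe_ne_top a),
    EReal.coe_ennreal_mul, EReal.coe_ennreal_ofReal, max_eq_left ha, EReal.coe_mul]

theorem sub_le_sub_iff_add_le_add {k u : ℝ≥0∞} {c d : ℝ} (hc : 0 ≤ c) (hd : 0 ≤ d) :
    (k : EReal) - (c : EReal) ≤ (u : EReal) - (d : EReal) ↔
      k + ENNReal.ofReal d ≤ u + ENNReal.ofReal c := by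
  lift c to NNReal using hc
  lift d to NNReal using hd
  simp only [ENNReal.ofReal_coe_nnreal]
  induction u with
  | top => simp
  | coe u =>
    induction k with
    | top =>
      have h1 : ((⊤ : ℝ≥0∞) : EReal) - ((c : ℝ) : EReal) = ⊤ := by simp
      have h2 : ((u : ℝ≥0∞) : EReal) - ((d : ℝ) : EReal) = ((u - d : ℝ) : EReal) := rfl
      rw [h1, h2, top_le_iff]
      simp only [EReal.coe_ne_top, top_add, top_le_iff, false_iff]
      exact ENNReal.add_ne_top.2 ⟨ENNReal.coe_ne_top, ENNReal.coe_ne_top⟩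
    | coe k =>
      change ((k : ℝ) : EReal) - ((c : ℝ) : EReal) ≤ ((u : ℝ) : EReal) - ((d : ℝ) : EReal) ↔ _
      rw [← EReal.coe_sub, ← EReal.coe_sub, EReal.coe_le_coe_iff, ← ENNReal.coe_add,
        ← ENNReal.coe_add, ENNReal.coe_le_coe, ← NNReal.coe_le_coe, NNReal.coe_add, NNReal.coe_add]
      constructor <;> intro h <;> linarith

/-- The convexity inequality for values of the form `k - c`, rewritten without subtraction so that
it is preserved by integration in `ℝ≥0∞`. -/
theorem convex_iff_shift {k₀ k₁ k₂ : ℝ≥0∞} {a b c₀ c₁ c₂ : ℝ} (ha : 0 ≤ a) (hb : 0 ≤ b)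
    (hc₀ : 0 ≤ c₀) (hc₁ : 0 ≤ c₁) (hc₂ : 0 ≤ c₂) :
    (k₀ : EReal) - (c₀ : EReal) ≤ (a : EReal) * ((k₁ : EReal) - (c₁ : EReal)) +
        (b : EReal) * ((k₂ : EReal) - (c₂ : EReal)) ↔
      k₀ + (ENNReal.ofReal a * ENNReal.ofReal c₁ + ENNReal.ofReal b * ENNReal.ofReal c₂) ≤
        ENNReal.ofReal a * k₁ + ENNReal.ofReal b * k₂ + ENNReal.ofReal c₀ := by
  rw [coe_mul_sub ha, coe_mul_sub hb,
    ← EReal.add_sub_add_comm (.inl (EReal.coe_ne_bot _)) (.inl (EReal.coe_ne_top _)),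
    ← EReal.coe_add, ← EReal.coe_ennreal_add, sub_le_sub_iff_add_le_add hc₀ (by positivity),
    ENNReal.ofReal_add (by positivity) (by positivity), ENNReal.ofReal_mul ha,
    ENNReal.ofReal_mul hb]

/-! ### The conditional integrand -/

/-- A regular conditional distribution `κ` of `Φ` given `X`, modified so that a given integrable
function of `Φ` has a finite `κ γ`-integral for every `γ`. The modification sets `κ γ` to zero on
a null set, so `κ` is a finite kernel but not a Markov kernel. -/
theorem exists_kernel {Γ Y : Type*} {mΩ : MeasurableSpace Ω} [MeasurableSpace Γ]
    [MeasurableSpace Y] [StandardBorelSpace Y] [Nonempty Y] (μ : Measure Ω) [IsProbabilityMeasure μ]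
    {X : Ω → Γ} (hX : Measurable X) {Φ : Ω → Y} (hΦ : Measurable Φ) {R : Y → ℝ≥0∞}
    (hR : Measurable R) (hRfin : ∫⁻ ω, R (Φ ω) ∂μ ≠ ⊤) :
    ∃ κ : ProbabilityTheory.Kernel Γ Y, ProbabilityTheory.IsFiniteKernel κ ∧
      (∀ γ, ∫⁻ y, R y ∂κ γ ≠ ⊤) ∧ ∀ F : Γ × Y → ℝ≥0∞, Measurable F →
        ∫⁻ ω, ∫⁻ y, F (X ω, y) ∂κ (X ω) ∂μ = ∫⁻ ω, F (X ω, Φ ω) ∂μ := by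
  classical
  let κ₀ := ProbabilityTheory.condDistrib Φ X μ
  have hint : ∀ F : Γ × Y → ℝ≥0∞, Measurable F →
      ∫⁻ γ, ∫⁻ y, F (γ, y) ∂κ₀ γ ∂(μ.map X) = ∫⁻ ω, F (X ω, Φ ω) ∂μ := by
    intro F hF
    rw [← Measure.lintegral_compProd hF, ProbabilityTheory.compProd_map_condDistrib hΦ.aemeasurable,
      lintegral_map hF (hX.prodMk hΦ)]
  have hmeas : Measurable fun γ => ∫⁻ y, R y ∂κ₀ γ :=
    Measurable.lintegral_kernel_prod_right' (κ := κ₀) (hR.comp measurable_snd)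
  let good : Set Γ := {γ | ∫⁻ y, R y ∂κ₀ γ < ⊤}
  have hgood : MeasurableSet good := measurableSet_lt hmeas measurable_const
  have hae : ∀ᵐ γ ∂(μ.map X), γ ∈ good := by
    refine ae_lt_top hmeas ?_
    rwa [hint (fun p => R p.2) (hR.comp measurable_snd)]
  refine ⟨ProbabilityTheory.Kernel.piecewise hgood κ₀ 0, inferInstance, fun γ => ?_,
    fun F hF => ?_⟩
  · rw [ProbabilityTheory.Kernel.piecewise_apply]
    split_ifs with h
    · exact h.ne
    · simp
  · rw [← hint F hF]
    have hm : Measurable fun γ =>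
        ∫⁻ y, F (γ, y) ∂(ProbabilityTheory.Kernel.piecewise hgood κ₀ 0) γ :=
      Measurable.lintegral_kernel_prod_right' hF
    rw [← lintegral_map hm hX]
    refine lintegral_congr_ae ?_
    filter_upwards [hae] with γ hγ
    rw [ProbabilityTheory.Kernel.piecewise_apply, if_pos hγ]

/-- The conditional integrand `g`, as a function on the range of a random element `X`. Conditioning
on a sub-σ-algebra `G` is the case where `X` is the identity from `Ω` to `Ω` with the σ-algebra `G`;
keeping `Γ` separate from `Ω` avoids two measurable structures on one type. The function `g x γ` is
the integral of `H x` with respect to the conditional law of `Φ` at `γ`. -/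
theorem exists_conditional {E Γ : Type*} [NormedAddCommGroup E] [NormedSpace ℝ E] [PolishSpace E]
    [MeasurableSpace E] [BorelSpace E] [mΓ : MeasurableSpace Γ] {mΩ : MeasurableSpace Ω}
    (μ : Measure Ω) [IsProbabilityMeasure μ] {X : Ω → Γ} (hX : Measurable X)
    (h : E → Ω → EReal) (hNI : IsNormalIntegrand mΩ h) (hLB : LBounded μ h) :
    ∃ g : E → Γ → EReal, IsNormalIntegrand mΓ g ∧
      (∃ ρ m : Γ → ℝ, Integrable (fun ω => ρ (X ω)) μ ∧ Integrable (fun ω => m (X ω)) μ ∧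
        (∀ γ, 0 ≤ ρ γ) ∧ (∀ γ, 0 ≤ m γ) ∧
        ∀ γ x, (↑(-(ρ γ * ‖x‖ + m γ)) : EReal) ≤ g x γ) ∧
      (ConvexIntegrand h → ConvexIntegrand g) ∧
      ∀ x : Γ → E, Measurable x → QuasiIntegrable μ (fun ω => h (x (X ω)) ω) →
        Measurable (fun γ => g (x γ) γ) ∧
        ∀ α : Γ → ℝ, Measurable α → (∀ γ, 0 ≤ α γ) → (∃ C, ∀ γ, α γ ≤ C) →
          EInt μ (fun ω => (α (X ω) : EReal) * g (x (X ω)) (X ω)) =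
            EInt μ (fun ω => (α (X ω) : EReal) * h (x (X ω)) ω) := by
  obtain ⟨Φ, H, hΦ, hH, hlsc, hbd, hconv, hrep, hint₁, hint₂⟩ := exists_representation μ h hNI hLB
  let R₁ : ℝ × ℝ × ℝ → ℝ≥0∞ := fun y => ENNReal.ofReal |y.2.1|
  let R₂ : ℝ × ℝ × ℝ → ℝ≥0∞ := fun y => ENNReal.ofReal |y.2.2|
  have hR₁ : Measurable R₁ := (measurable_fst.comp measurable_snd).abs.ennreal_ofReal
  have hR₂ : Measurable R₂ := (measurable_snd.comp measurable_snd).abs.ennreal_ofReal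
  have hR₁fin : ∫⁻ ω, R₁ (Φ ω) ∂μ ≠ ⊤ := hint₁.lintegral_lt_top.ne
  have hR₂fin : ∫⁻ ω, R₂ (Φ ω) ∂μ ≠ ⊤ := hint₂.lintegral_lt_top.ne
  obtain ⟨κ, hκ, hκR, hκint⟩ := exists_kernel μ hX hΦ (hR₁.add hR₂) (by
    have hadd := lintegral_add_left (μ := μ) (hR₁.comp hΦ) (fun ω => R₂ (Φ ω))
    simp only [Function.comp_apply] at hadd
    simp only [Pi.add_apply]
    rw [hadd]
    exact ENNReal.add_ne_top.2 ⟨hR₁fin, hR₂fin⟩)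
  have hκ₁ : ∀ γ, ∫⁻ y, R₁ y ∂κ γ ≠ ⊤ := fun γ =>
    ne_top_of_le_ne_top (hκR γ) (lintegral_mono fun y => (le_self_add : R₁ y ≤ R₁ y + R₂ y))
  have hκ₂ : ∀ γ, ∫⁻ y, R₂ y ∂κ γ ≠ ⊤ := fun γ =>
    ne_top_of_le_ne_top (hκR γ) (lintegral_mono fun y => (le_add_self : R₂ y ≤ R₁ y + R₂ y))
  let ρ : Γ → ℝ := fun γ => (∫⁻ y, R₁ y ∂κ γ).toReal
  let m : Γ → ℝ := fun γ => (∫⁻ y, R₂ y ∂κ γ).toReal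
  have hρ0 : ∀ γ, 0 ≤ ρ γ := fun γ => ENNReal.toReal_nonneg
  have hm0 : ∀ γ, 0 ≤ m γ := fun γ => ENNReal.toReal_nonneg
  have hρm' : Measurable fun γ => ∫⁻ y, R₁ y ∂κ γ :=
    Measurable.lintegral_kernel_prod_right' (κ := κ) (hR₁.comp measurable_snd)
  have hmm' : Measurable fun γ => ∫⁻ y, R₂ y ∂κ γ :=
    Measurable.lintegral_kernel_prod_right' (κ := κ) (hR₂.comp measurable_snd)
  have hρm : Measurable ρ := hρm'.ennreal_toReal
  have hmm : Measurable m := hmm'.ennreal_toReal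
  -- Adding the lower bound `c` makes the integrand nonnegative, so that `K = H + c` can be integrated
  -- in `ℝ≥0∞`; its conditional mean `C` is finite everywhere and is subtracted afterwards.
  let c : E → ℝ × ℝ × ℝ → ℝ := fun x y => |y.2.1| * ‖x‖ + |y.2.2|
  have hc0 : ∀ x y, 0 ≤ c x y := fun x y => by positivity
  have hcm : Measurable fun p : E × (ℝ × ℝ × ℝ) => c p.1 p.2 := by
    have h1 : Measurable fun p : E × (ℝ × ℝ × ℝ) => ‖p.1‖ := measurable_fst.norm
    have h2 : Measurable fun p : E × (ℝ × ℝ × ℝ) => |p.2.2.1| := by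
      have : Measurable fun p : E × (ℝ × ℝ × ℝ) => p.2.2.1 := by fun_prop
      exact this.abs
    have h3 : Measurable fun p : E × (ℝ × ℝ × ℝ) => |p.2.2.2| := by
      have : Measurable fun p : E × (ℝ × ℝ × ℝ) => p.2.2.2 := by fun_prop
      exact this.abs
    exact (h2.mul h1).add h3
  let C : E → Γ → ℝ := fun x γ => ρ γ * ‖x‖ + m γ
  have hC0 : ∀ x γ, 0 ≤ C x γ := fun x γ =>
    add_nonneg (mul_nonneg (hρ0 γ) (norm_nonneg x)) (hm0 γ)
  have hcy : ∀ x, Measurable fun y => c x y := fun x => hcm.comp measurable_prodMk_left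
  have hcC : ∀ x γ, ∫⁻ y, ENNReal.ofReal (c x y) ∂κ γ = ENNReal.ofReal (C x γ) := by
    intro x γ
    have : ∀ y, ENNReal.ofReal (c x y) = R₁ y * ENNReal.ofReal ‖x‖ + R₂ y := fun y => by
      rw [← ENNReal.ofReal_mul (abs_nonneg _), ← ENNReal.ofReal_add (by positivity) (abs_nonneg _)]
    simp_rw [this]
    rw [lintegral_add_right _ hR₂, lintegral_mul_const _ hR₁,
      ENNReal.ofReal_add (mul_nonneg (hρ0 γ) (norm_nonneg x)) (hm0 γ), ENNReal.ofReal_mul (hρ0 γ),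
      ENNReal.ofReal_toReal (hκ₁ γ), ENNReal.ofReal_toReal (hκ₂ γ)]
  let K : E → ℝ × ℝ × ℝ → ℝ≥0∞ := fun x y => (H x y + (c x y : EReal)).toENNReal
  have hKm : Measurable fun p : E × (ℝ × ℝ × ℝ) => K p.1 p.2 :=
    (hH.add hcm.coe_real_ereal).ereal_toENNReal
  have hKy : ∀ x, Measurable fun y => K x y := fun x => hKm.comp measurable_prodMk_left
  have hHy : ∀ x, Measurable fun y => H x y := fun x => hH.comp measurable_prodMk_left
  have hKH : ∀ x y, H x y = (K x y : EReal) - (c x y : EReal) := by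
    intro x y
    have h0 : 0 ≤ H x y + (c x y : EReal) := by
      have := add_le_add_left (hbd x y) (c x y : EReal)
      refine le_trans (le_of_eq ?_) this
      rw [← EReal.coe_add, neg_add_cancel, EReal.coe_zero]
    rw [EReal.coe_toENNReal h0, EReal.add_sub_cancel_right]
  have hKlsc : ∀ y, LowerSemicontinuous fun x => K x y := by
    intro y
    have hcc : Continuous fun x => (c x y : EReal) :=
      continuous_coe_real_ereal.comp (by fun_prop)
    have h1 : LowerSemicontinuous fun x => H x y + (c x y : EReal) :=
      (hlsc y).add' hcc.lowerSemicontinuous fun x =>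
        EReal.continuousAt_add (.inr (EReal.coe_ne_bot _)) (.inr (EReal.coe_ne_top _))
    exact EReal.continuous_toENNReal.comp_lowerSemicontinuous h1
      fun _ _ => EReal.toENNReal_le_toENNReal
  let k : E → Γ → ℝ≥0∞ := fun x γ => ∫⁻ y, K x y ∂κ γ
  have hkm : Measurable fun p : E × Γ => k p.1 p.2 := by
    have h1 : Measurable fun q : (E × Γ) × (ℝ × ℝ × ℝ) => K q.1.1 q.2 :=
      hKm.comp ((measurable_fst.comp measurable_fst).prodMk measurable_snd)
    have := Measurable.lintegral_kernel_prod_right'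
      (κ := ProbabilityTheory.Kernel.prodMkLeft E κ) h1
    simpa only [ProbabilityTheory.Kernel.prodMkLeft_apply] using this
  have hklsc : ∀ γ, LowerSemicontinuous fun x => k x γ := by
    -- Fatou for a filter with a countable basis
    intro γ x₀
    refine lowerSemicontinuousAt_iff_le_liminf.2 ?_
    calc k x₀ γ ≤ ∫⁻ y, liminf (fun x => K x y) (𝓝 x₀) ∂κ γ :=
          lintegral_mono fun y => lowerSemicontinuousAt_iff_le_liminf.1 (hKlsc y x₀)
      _ ≤ liminf (fun x => ∫⁻ y, K x y ∂κ γ) (𝓝 x₀) := lintegral_liminf_le hKy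
  have hCm : Measurable fun p : E × Γ => C p.1 p.2 := by
    have h1 : Measurable fun p : E × Γ => ‖p.1‖ := measurable_fst.norm
    exact ((hρm.comp measurable_snd).mul h1).add (hmm.comp measurable_snd)
  let g : E → Γ → EReal := fun x γ => (k x γ : EReal) - (C x γ : EReal)
  have hgm : Measurable fun p : E × Γ => g p.1 p.2 :=
    hkm.coe_ereal_ennreal.sub hCm.coe_real_ereal
  have hglb : ∀ γ x, (↑(-(ρ γ * ‖x‖ + m γ)) : EReal) ≤ g x γ := by
    intro γ x
    have : ((0 : EReal)) - (C x γ : EReal) ≤ g x γ :=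
      EReal.sub_le_sub (EReal.coe_ennreal_nonneg _) le_rfl
    rwa [zero_sub, ← EReal.coe_neg] at this
  refine ⟨g, ⟨hgm, fun γ => ?_, fun x γ => ?_⟩, ⟨ρ, m, ?_, ?_, hρ0, hm0, hglb⟩, fun hcv γ => ?_,
    fun x hx hq => ⟨hgm.comp (hx.prodMk measurable_id), fun α hα hα0 hαC => ?_⟩⟩
  · have h1 : LowerSemicontinuous fun x => (k x γ : EReal) :=
      continuous_coe_ennreal_ereal.comp_lowerSemicontinuous (hklsc γ)
        fun _ _ hab => EReal.coe_ennreal_le_coe_ennreal_iff.2 hab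
    have h2 : Continuous fun x => ((-(C x γ) : ℝ) : EReal) :=
      continuous_coe_real_ereal.comp (by fun_prop)
    have h3 := h1.add' h2.lowerSemicontinuous fun x =>
        EReal.continuousAt_add (.inr (EReal.coe_ne_bot _)) (.inr (EReal.coe_ne_top _))
    simpa only [g, sub_eq_add_neg, EReal.coe_neg] using h3
  · exact ne_bot_of_le_ne_bot (EReal.coe_ne_bot _) (hglb γ x)
  · refine integrable_toReal_of_lintegral_ne_top (hρm'.comp hX).aemeasurable ?_
    rwa [hκint (fun p => R₁ p.2) (hR₁.comp measurable_snd)]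
  · refine integrable_toReal_of_lintegral_ne_top (hmm'.comp hX).aemeasurable ?_
    rwa [hκint (fun p => R₂ p.2) (hR₂.comp measurable_snd)]
  · intro x x' a b ha hb hab
    simp only [g]
    rw [convex_iff_shift ha hb (hC0 _ _) (hC0 _ _) (hC0 _ _), ← hcC, ← hcC, ← hcC]
    have hm₁ : ∀ z, Measurable fun y => ENNReal.ofReal (c z y) := fun z => (hcy z).ennreal_ofReal
    rw [← lintegral_const_mul _ (hm₁ x), ← lintegral_const_mul _ (hm₁ x'),
      ← lintegral_const_mul _ (hKy x), ← lintegral_const_mul _ (hKy x'),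
      ← lintegral_add_left ((hm₁ x).const_mul _), ← lintegral_add_left ((hKy x).const_mul _),
      ← lintegral_add_left (hKy _), ← lintegral_add_right _ (hm₁ _)]
    refine lintegral_mono fun y => ?_
    refine (convex_iff_shift ha hb (hc0 _ _) (hc0 _ _) (hc0 _ _)).1 ?_
    rw [← hKH, ← hKH, ← hKH]
    exact hconv hcv y x x' a b ha hb hab
  · let P : Γ → ℝ≥0∞ := fun γ => ∫⁻ y, (H (x γ) y).toENNReal ∂κ γ
    let N : Γ → ℝ≥0∞ := fun γ => ∫⁻ y, (-(H (x γ) y)).toENNReal ∂κ γ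
    have hHx : Measurable fun q : Γ × (ℝ × ℝ × ℝ) => H (x q.1) q.2 :=
      hH.comp ((hx.comp measurable_fst).prodMk measurable_snd)
    have hPm : Measurable P := Measurable.lintegral_kernel_prod_right' (κ := κ) hHx.ereal_toENNReal
    have hNm : Measurable N :=
      Measurable.lintegral_kernel_prod_right' (κ := κ) hHx.neg.ereal_toENNReal
    have hNfin : ∀ γ, N γ ≠ ⊤ := by
      intro γ
      refine ne_top_of_le_ne_top (ENNReal.ofReal_ne_top (r := C (x γ) γ)) ?_
      rw [← hcC]
      refine lintegral_mono fun y => ?_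
      rw [← EReal.real_coe_toENNReal]
      apply EReal.toENNReal_le_toENNReal
      rw [EReal.neg_le, ← EReal.coe_neg]
      exact hbd _ _
    -- the definition of `g` by shifting agrees with integration of positive and negative parts
    have hgPN : ∀ γ, g (x γ) γ = (P γ : EReal) - (N γ : EReal) := by
      intro γ
      refine coe_sub_eq_sub (hC0 _ _) (hNfin γ) ?_
      rw [← hcC, ← lintegral_add_left (hKy _), ← lintegral_add_left (hHy _).ereal_toENNReal]
      exact lintegral_congr fun y => toENNReal_shift (hc0 _ _) (hbd _ _)
    -- The disintegration identity only covers nonnegative functions, so `α * h` is split into its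
    -- positive and negative parts.
    have hPint : ∫⁻ ω, ENNReal.ofReal (α (X ω)) * P (X ω) ∂μ =
        ∫⁻ ω, ((α (X ω) : EReal) * h (x (X ω)) ω).toENNReal ∂μ := by
      have h1 := hκint (fun q => ENNReal.ofReal (α q.1) * (H (x q.1) q.2).toENNReal)
        ((hα.comp measurable_fst).ennreal_ofReal.mul hHx.ereal_toENNReal)
      have h2 : ∀ γ, Measurable fun y => (H (x γ) y).toENNReal := fun γ => (hHy _).ereal_toENNReal
      simp only [lintegral_const_mul _ (h2 _)] at h1
      rw [h1]
      refine lintegral_congr_ae ?_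
      filter_upwards [hrep] with ω hω
      rw [EReal.toENNReal_mul (by exact_mod_cast hα0 _), EReal.real_coe_toENNReal, hω]
    have hNint : ∫⁻ ω, ENNReal.ofReal (α (X ω)) * N (X ω) ∂μ =
        ∫⁻ ω, (-((α (X ω) : EReal) * h (x (X ω)) ω)).toENNReal ∂μ := by
      have h1 := hκint (fun q => ENNReal.ofReal (α q.1) * (-(H (x q.1) q.2)).toENNReal)
        ((hα.comp measurable_fst).ennreal_ofReal.mul hHx.neg.ereal_toENNReal)
      have h2 : ∀ γ, Measurable fun y => (-(H (x γ) y)).toENNReal :=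
        fun γ => (hHy _).neg.ereal_toENNReal
      simp only [lintegral_const_mul _ (h2 _)] at h1
      rw [h1]
      refine lintegral_congr_ae ?_
      filter_upwards [hrep] with ω hω
      rw [← mul_neg, EReal.toENNReal_mul (by exact_mod_cast hα0 _),
        EReal.real_coe_toENNReal, hω]
    obtain ⟨B, hB⟩ := hαC
    have hbound : ∀ f : Ω → EReal, ∫⁻ ω, (f ω).toENNReal ∂μ ≠ ⊤ →
        ∫⁻ ω, ((α (X ω) : EReal) * f ω).toENNReal ∂μ ≠ ⊤ := by
      intro f hf
      refine ne_top_of_le_ne_top (ENNReal.mul_ne_top (ENNReal.ofReal_ne_top (r := B)) hf) ?_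
      rw [← lintegral_const_mul' _ _ ENNReal.ofReal_ne_top]
      refine lintegral_mono fun ω => ?_
      rw [EReal.toENNReal_mul (by exact_mod_cast hα0 _), EReal.real_coe_toENNReal]
      gcongr
      exact hB _
    have hfin : ∫⁻ ω, ENNReal.ofReal (α (X ω)) * P (X ω) ∂μ ≠ ⊤ ∨
        ∫⁻ ω, ENNReal.ofReal (α (X ω)) * N (X ω) ∂μ ≠ ⊤ := by
      rw [hPint, hNint]
      simp only [QuasiIntegrable, ePos_eq_toENNReal] at hq
      refine hq.imp (hbound _) fun h' => ?_
      simpa only [mul_neg] using hbound _ h'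
    have hsplit : ∀ ω, (α (X ω) : EReal) * g (x (X ω)) (X ω) =
        ((ENNReal.ofReal (α (X ω)) * P (X ω) : ℝ≥0∞) : EReal) -
          ((ENNReal.ofReal (α (X ω)) * N (X ω) : ℝ≥0∞) : EReal) := by
      intro ω
      rw [hgPN, EReal.mul_sub_of_nonneg_of_ne_top (by exact_mod_cast hα0 _) (EReal.coe_ne_top _),
        EReal.coe_ennreal_mul, EReal.coe_ennreal_mul, EReal.coe_ennreal_ofReal,
        max_eq_left (hα0 _)]
    simp only [hsplit]
    have hαX : Measurable fun ω => ENNReal.ofReal (α (X ω)) := (hα.comp hX).ennreal_ofReal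
    rw [EInt_sub μ (A := fun ω => ENNReal.ofReal (α (X ω)) * P (X ω))
      (B := fun ω => ENNReal.ofReal (α (X ω)) * N (X ω))
      (hαX.mul (hPm.comp hX)) (hαX.mul (hNm.comp hX)) (fun ω => ENNReal.mul_ne_top ENNReal.ofReal_ne_top (hNfin _)) hfin, hPint, hNint]
    simp only [EInt, ePos_eq_toENNReal]

/-- Theorem 2.7: every L-bounded normal integrand admits an L-bounded
`G`-conditional expectation; if moreover the integrand is convex, the conditional
expectation can be chosen convex as well. -/
theorem statement3 {Ω : Type*} {mΩ : MeasurableSpace Ω} (μ : Measure Ω)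
    [IsProbabilityMeasure μ] (hcompl : μ.IsComplete)
    (G : MeasurableSpace Ω) (hG : G ≤ mΩ) (n : ℕ)
    (h : EuclideanSpace ℝ (Fin n) → Ω → EReal)
    (hNI : IsNormalIntegrand mΩ h) (hLB : LBounded μ h) :
    (∃ hhat : EuclideanSpace ℝ (Fin n) → Ω → EReal,
      IsCondNI μ G h hhat ∧ LBounded μ hhat) ∧
    (ConvexIntegrand h → ∃ hhat : EuclideanSpace ℝ (Fin n) → Ω → EReal,
      IsCondNI μ G h hhat ∧ LBounded μ hhat ∧ ConvexIntegrand hhat) := by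
  obtain ⟨g, hg, ⟨ρ, m, hρ, hm, hρ0, hm0, hle⟩, hconv, hcond⟩ :=
    exists_conditional (mΓ := G) μ (X := id) (measurable_id'' hG) h hNI hLB
  have h1 : IsCondNI μ G h g := ⟨hg, hcond⟩
  have h2 : LBounded μ g := ⟨ρ, m, hρ, hm, hρ0, hm0, .of_forall hle⟩
  exact ⟨⟨g, h1, h2⟩, fun hc => ⟨g, h1, h2, hconv hc⟩⟩

end PaperDP
end
end

section
/- Let H, G, A be sub-σ-algebras of F such that A and G are H-conditionally independent, i.e., E^H[1_{A′}·1_B] = E^H[1_{A′}]·E^H[1_B] a.s. for every A′ ∈ A and B ∈ G. Let h be an L-bounded normal integrand on ℝⁿ that is B(ℝⁿ)⊗A-measurable. Then every H-conditional expectation of h is also a (G∨H)-conditional expectation of h. In particular, if A is independent of G and H is the trivial σ-algebra, then h admits a G-conditional expectation that does not depend on ω. -/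
/-!
The proof avoids measurable selections. Three ideas carry it.

* Signs. For quasi-integrable `ξ`, the identity `E[a ξ'] = E[a ξ]` for all test functions `a` is
  equivalent to the subtraction-free `Balance`:
  `∫⁻ a ξ'⁺ + ∫⁻ a ξ⁻ = ∫⁻ a ξ⁺ + ∫⁻ a ξ'⁻`
  (`balance_of_isCondExpER`, `isCondExpER_of_balance`). Balance is countably additive in `a`, so
  L-boundedness, which only controls `h` along bounded `y`, yields it for every `H`-measurable
  `y` and `a` by cutting along the level sets of `⌊‖y‖ + |a|⌋` (`balance_of_isCondNI`).

* Randomization. Let `x` and `α` be `G ⊔ H`-measurable, and let `κ` be the conditional law of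
  `(x, α)` given `H`. Conditional independence says that `κ` is also the conditional law given
  `A ⊔ H` (`measureReal_inter_eq`). Since `E × ℝ` is standard Borel, `κ(ω)` is the law of
  `φ(ω, U)` with `U` uniform on `[0, 1]` and `φ` jointly measurable, so that
  `E[f((x, α), ω)] = ∫₀¹ E[f(φ(ω, u), ω)] du` for nonnegative `f` (`exists_randomization`).

* Averaging. For each fixed `u`, `φ(·, u)` is `H`-measurable, so balance holds along it;
  integrating over `u` gives balance along `(x, α)` (`balance_lift`), which is the first claim.

For trivial `H`, the expectation `y ↦ E[h(y, ·)]` is an `H`-conditional expectation of `h`: it is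
lower semicontinuous by Fatou's lemma applied to `h(y, ·) + ρ‖y‖ + m ≥ 0`
(`exists_isCondNI_bot`), and the first claim upgrades it to a `G`-conditional expectation.
-/

open MeasureTheory ENNReal
open scoped RealInnerProductSpace

noncomputable section

namespace PaperDP

variable {Ω : Type*}

/-- `A` and `G` are `H`-conditionally independent under `μ`:
`E^H[1_{A'} 1_B] = E^H[1_{A'}] E^H[1_B]` a.s. for all `A' ∈ A`, `B ∈ G`. -/
def CondIndepSA {Ω : Type*} {mΩ : MeasurableSpace Ω} (μ : Measure Ω)
    (H A G : MeasurableSpace Ω) : Prop :=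
  ∀ A' B : Set Ω, MeasurableSet[A] A' → MeasurableSet[G] B →
    μ[fun ω => A'.indicator (fun _ => (1 : ℝ)) ω * B.indicator (fun _ => (1 : ℝ)) ω|H]
      =ᵐ[μ] fun ω =>
        (μ[A'.indicator fun _ => (1 : ℝ)|H]) ω * (μ[B.indicator fun _ => (1 : ℝ)|H]) ω

/-! ### Conditional independence and randomization -/

/-- `E[1_{A'} | H]` is a version of `E[1_{A'} | G ⊔ H]`: conditional independence gives the
identity on the π-system of sets `B ∩ C` with `B ∈ G`, `C ∈ H`. -/
theorem setIntegral_sup_eq {mΩ : MeasurableSpace Ω} (μ : Measure Ω)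
    [IsProbabilityMeasure μ] (H A G : MeasurableSpace Ω) (hH : H ≤ mΩ) (hA : A ≤ mΩ)
    (hG : G ≤ mΩ) (hci : CondIndepSA μ H A G) {A' s : Set Ω} (hA' : MeasurableSet[A] A')
    (hs : MeasurableSet[G ⊔ H] s) :
    ∫ ω in s, A'.indicator (fun _ => (1 : ℝ)) ω ∂μ
      = ∫ ω in s, (μ[A'.indicator fun _ => (1 : ℝ)|H]) ω ∂μ := by
  have hGH : G ⊔ H ≤ mΩ := sup_le hG hH
  set f : Ω → ℝ := A'.indicator fun _ => (1 : ℝ) with hf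
  have hfi : Integrable f μ := (integrable_const 1).indicator (hA _ hA')
  have hpi : Integrable (μ[f|H]) μ := integrable_condExp
  have hgen : G ⊔ H = MeasurableSpace.generateFrom
      (Set.image2 (· ∩ ·) {B | MeasurableSet[G] B} {C | MeasurableSet[H] C}) := by
    apply le_antisymm
    · refine sup_le (fun B hB => ?_) (fun C hC => ?_)
      · exact MeasurableSpace.measurableSet_generateFrom ⟨B, hB, Set.univ, .univ, by simp⟩
      · exact MeasurableSpace.measurableSet_generateFrom ⟨Set.univ, .univ, C, hC, by simp⟩
    · refine MeasurableSpace.generateFrom_le ?_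
      rintro _ ⟨B, hB, C, hC, rfl⟩
      exact MeasurableSet.inter (le_sup_left (a := G) (b := H) _ hB)
        (le_sup_right (a := G) (b := H) _ hC)
  have hpis : IsPiSystem
      (Set.image2 (· ∩ ·) {B : Set Ω | MeasurableSet[G] B} {C | MeasurableSet[H] C}) := by
    rintro _ ⟨B, hB, C, hC, rfl⟩ _ ⟨B', hB', C', hC', rfl⟩ -
    exact ⟨B ∩ B', MeasurableSet.inter hB hB', C ∩ C', MeasurableSet.inter hC hC',
      Set.inter_inter_inter_comm _ _ _ _⟩
  induction s, hs using MeasurableSpace.induction_on_inter hgen hpis with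
  | empty => simp
  | basic t ht =>
    obtain ⟨B, hB, C, hC, rfl⟩ := ht
    have hB' := hG _ hB
    set g : Ω → ℝ := B.indicator fun _ => (1 : ℝ) with hg
    have hgi : Integrable g μ := (integrable_const 1).indicator hB'
    have e1 : ∀ k : Ω → ℝ, ∫ ω in B ∩ C, k ω ∂μ = ∫ ω in C, (k * g) ω ∂μ := by
      intro k
      rw [Set.inter_comm, ← setIntegral_indicator hB']
      congr 1 with ω
      by_cases h : ω ∈ B <;> simp [hg, h]
    have hbd : ∀ k : Ω → ℝ, Integrable k μ → Integrable (k * g) μ := by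
      intro k hk
      have : k * g = B.indicator k := by
        ext ω; by_cases h : ω ∈ B <;> simp [hg, h]
      rw [this]; exact hk.indicator hB'
    simp only
    rw [e1, e1, ← setIntegral_condExp hH (hbd f hfi) hC, ← setIntegral_condExp hH (hbd _ hpi) hC]
    refine integral_congr_ae (ae_restrict_of_ae ?_)
    have h1 := hci A' B hA' hB
    have h2 := condExp_mul_of_stronglyMeasurable_left (μ := μ) (m := H)
      (f := μ[f|H]) (g := g) stronglyMeasurable_condExp (hbd _ hpi) hgi
    exact h1.trans h2.symm
  | compl t ht ih =>
    have := integral_add_compl (hGH _ ht) hfi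
    have := integral_add_compl (hGH _ ht) hpi
    have := integral_condExp (μ := μ) hH (f := f)
    linarith
  | iUnion t hd ht ih =>
    rw [integral_iUnion (fun i => hGH _ (ht i)) hd hfi.integrableOn,
      integral_iUnion (fun i => hGH _ (ht i)) hd hpi.integrableOn]
    exact tsum_congr ih

/-- `E[1_s | H]` is a version of `E[1_s | A ⊔ H]` for `s ∈ G ⊔ H`, tested on the sets `C ∩ A'`:
both sides equal `∫_C E[1_{A'} | H] E[1_s | H]`. -/
theorem measureReal_inter_eq {mΩ : MeasurableSpace Ω} (μ : Measure Ω)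
    [IsProbabilityMeasure μ] (H A G : MeasurableSpace Ω) (hH : H ≤ mΩ) (hA : A ≤ mΩ)
    (hG : G ≤ mΩ) (hci : CondIndepSA μ H A G) {A' C s : Set Ω} (hA' : MeasurableSet[A] A')
    (hC : MeasurableSet[H] C) (hs : MeasurableSet[G ⊔ H] s) :
    μ.real (s ∩ (C ∩ A')) = ∫ ω in C ∩ A', (μ[s.indicator fun _ => (1 : ℝ)|H]) ω ∂μ := by
  have hGH : G ⊔ H ≤ mΩ := sup_le hG hH
  have hA'' := hA _ hA'
  have hs'' := hGH _ hs
  set f : Ω → ℝ := A'.indicator fun _ => (1 : ℝ) with hf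
  set g : Ω → ℝ := s.indicator fun _ => (1 : ℝ) with hg
  have hfi : Integrable f μ := (integrable_const 1).indicator hA''
  have hgi : Integrable g μ := (integrable_const 1).indicator hs''
  have hpi : Integrable (μ[f|H]) μ := integrable_condExp
  have hqi : Integrable (μ[g|H]) μ := integrable_condExp
  have hfm : ∀ k : Ω → ℝ, k * f = A'.indicator k := by
    intro k; ext ω; by_cases h : ω ∈ A' <;> simp [hf, h]
  have hgm : ∀ k : Ω → ℝ, k * g = s.indicator k := by
    intro k; ext ω; by_cases h : ω ∈ s <;> simp [hg, h]
  have i1 : Integrable (μ[f|H] * g) μ := by rw [hgm]; exact hpi.indicator hs''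
  have i2 : Integrable (μ[g|H] * f) μ := by rw [hfm]; exact hqi.indicator hA''
  have e0 : μ.real (s ∩ (C ∩ A')) = ∫ ω in C ∩ s, f ω ∂μ := by
    rw [hf, setIntegral_indicator hA'']
    simp only [integral_const, measureReal_restrict_apply_univ, smul_eq_mul, mul_one]
    congr 1
    ext ω; simp; tauto
  rw [e0, setIntegral_sup_eq μ H A G hH hA hG hci hA'
    (MeasurableSet.inter (le_sup_right (a := G) (b := H) _ hC) hs),
    ← setIntegral_indicator hs'', ← setIntegral_indicator hA'', ← hfm (μ[g|H]), ← hgm (μ[f|H]),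
    ← setIntegral_condExp hH i1 hC, ← setIntegral_condExp hH i2 hC]
  refine integral_congr_ae (ae_restrict_of_ae ?_)
  have h1 := condExp_mul_of_stronglyMeasurable_left (μ := μ) (m := H)
      (f := μ[f|H]) (g := g) stronglyMeasurable_condExp i1 hgi
  have h2 := condExp_mul_of_stronglyMeasurable_left (μ := μ) (m := H)
      (f := μ[g|H]) (g := f) stronglyMeasurable_condExp i2 hfi
  refine h1.trans (Filter.EventuallyEq.trans ?_ h2.symm)
  rw [mul_comm]

/-- If `Z` and `τ` are conditionally independent given `π`, then `(Z, π, τ)` has the same law as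
`(φ(π, U), π, τ)` for a measurable `φ` and `U` uniform on `[0, 1]` independent of `(π, τ)`. -/
theorem exists_randomization {S R T : Type*} [mΩ : MeasurableSpace Ω] [mS : MeasurableSpace S]
    [MeasurableSpace R] [MeasurableSpace T] [StandardBorelSpace T] [Nonempty T]
    (μ : Measure Ω) [IsProbabilityMeasure μ] (Z : Ω → T) (π : Ω → S) (τ : Ω → R)
    (hZ : Measurable Z) (hπ : Measurable π) (hτ : Measurable τ)
    (hci : ∀ B C D, MeasurableSet B → MeasurableSet C → MeasurableSet D →
      μ.real (Z ⁻¹' B ∩ (π ⁻¹' C ∩ τ ⁻¹' D)) =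
        ∫ ω in π ⁻¹' C ∩ τ ⁻¹' D,
          (μ[(Z ⁻¹' B).indicator fun _ => (1 : ℝ)|mS.comap π]) ω ∂μ) :
    ∃ φ : S → unitInterval → T, Measurable (Function.uncurry φ) ∧
      ∀ f : T × S × R → ℝ≥0∞, Measurable f →
        ∫⁻ ω, f (Z ω, π ω, τ ω) ∂μ = ∫⁻ u, ∫⁻ ω, f (φ (π ω) u, π ω, τ ω) ∂μ := by
  obtain ⟨φ, hφ, hφκ⟩ := ProbabilityTheory.Kernel.exists_measurable_map_eq_unitInterval
    (ProbabilityTheory.condDistrib Z π μ)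
  refine ⟨φ, hφ, fun f hf => ?_⟩
  have hm1 : Measurable fun ω => (Z ω, π ω, τ ω) := by fun_prop
  have hm2 : Measurable fun p : unitInterval × Ω => (φ (π p.2) p.1, π p.2, τ p.2) := by
    have : Measurable fun p : unitInterval × Ω => Function.uncurry φ (π p.2, p.1) := by
      fun_prop
    exact this.prodMk (by fun_prop)
  have key : μ.map (fun ω => (Z ω, π ω, τ ω)) =
      ((volume : Measure unitInterval).prod μ).map
        (fun p => (φ (π p.2) p.1, π p.2, τ p.2)) := by
    have : IsProbabilityMeasure (μ.map (fun ω => (Z ω, π ω, τ ω))) :=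
      Measure.isProbabilityMeasure_map hm1.aemeasurable
    refine Measure.ext_prod₃ fun {B C D} hB hC hD => ?_
    have hCD : MeasurableSet (π ⁻¹' C ∩ τ ⁻¹' D) := (hπ hC).inter (hτ hD)
    rw [Measure.map_apply hm1 (hB.prod (hC.prod hD)), Measure.map_apply hm2
      (hB.prod (hC.prod hD)), Measure.prod_apply_symm (hm2 (hB.prod (hC.prod hD)))]
    have e1 : ∀ ω, volume ((fun u : unitInterval => (u, ω)) ⁻¹'
        ((fun p : unitInterval × Ω => (φ (π p.2) p.1, π p.2, τ p.2)) ⁻¹' B ×ˢ C ×ˢ D)) =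
        (π ⁻¹' C ∩ τ ⁻¹' D).indicator
          (fun ω => ProbabilityTheory.condDistrib Z π μ (π ω) B) ω := by
      intro ω
      simp only [← hφκ]
      by_cases h : ω ∈ π ⁻¹' C ∩ τ ⁻¹' D
      · rw [Set.indicator_of_mem h, Measure.map_apply hφ.of_uncurry_left hB]
        congr 1
        ext u
        simp at h
        simp [h]
      · rw [Set.indicator_of_notMem h]
        convert measure_empty (μ := (volume : Measure unitInterval))
        ext u
        simp at h
        simpa using fun _ => h
    simp_rw [e1]
    rw [lintegral_indicator hCD]
    have e2 : (fun ω => (Z ω, π ω, τ ω)) ⁻¹' B ×ˢ C ×ˢ D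
      = Z ⁻¹' B ∩ (π ⁻¹' C ∩ τ ⁻¹' D) := by ext; simp
    rw [e2, ← ofReal_measureReal, hci B C D hB hC hD]
    have e3 := ProbabilityTheory.condDistrib_ae_eq_condExp (μ := μ) hπ hZ hB
    -- both sides are the integral of `κ(π ω, B)` over `π ⁻¹' C ∩ τ ⁻¹' D`
    rw [← integral_congr_ae (ae_restrict_of_ae e3),
      ofReal_integral_eq_lintegral_ofReal]
    · simp
    · exact (ProbabilityTheory.integrable_toReal_condDistrib hπ.aemeasurable hB).integrableOn
    · exact Filter.Eventually.of_forall fun _ => measureReal_nonneg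
  rw [← lintegral_map hf hm1, key, lintegral_map hf hm2, lintegral_prod _ (by fun_prop)]

/-! ### Conditional expectation without subtraction -/

/-- `Balance μ a ξ ξ'` expresses `E[a⁺ ξ'] = E[a⁺ ξ]` without subtraction, as an identity
between integrals of nonnegative functions with values in `[0, ∞]`. Unlike the identity of
extended integrals, it is additive in `a` and can be averaged over a parameter. -/
def Balance {mΩ : MeasurableSpace Ω} (μ : Measure Ω) (a : Ω → ℝ) (ξ ξ' : Ω → EReal) : Prop :=
  (∫⁻ ω, ENNReal.ofReal (a ω) * ePos (ξ' ω) ∂μ) + (∫⁻ ω, ENNReal.ofReal (a ω) * ePos (-ξ ω) ∂μ)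
    = (∫⁻ ω, ENNReal.ofReal (a ω) * ePos (ξ ω) ∂μ)
      + ∫⁻ ω, ENNReal.ofReal (a ω) * ePos (-ξ' ω) ∂μ

theorem ePos_eq_toENNReal_s6 : ePos = EReal.toENNReal := rfl

theorem ePos_coe_mul {a : ℝ} (ha : 0 ≤ a) (x : EReal) :
    ePos ((a : EReal) * x) = ENNReal.ofReal a * ePos x := by
  rw [ePos_eq_toENNReal_s6, EReal.toENNReal_mul (by exact_mod_cast ha), EReal.real_coe_toENNReal]

theorem ePos_neg_coe_mul {a : ℝ} (ha : 0 ≤ a) (x : EReal) :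
    ePos (-((a : EReal) * x)) = ENNReal.ofReal a * ePos (-x) := by
  rw [← ePos_coe_mul ha, mul_neg]

theorem EInt_coe_mul {mΩ : MeasurableSpace Ω} (μ : Measure Ω) {a : Ω → ℝ} (ha : ∀ ω, 0 ≤ a ω)
    (ξ : Ω → EReal) :
    EInt μ (fun ω => (a ω : EReal) * ξ ω) =
      if (∫⁻ ω, ENNReal.ofReal (a ω) * ePos (ξ ω) ∂μ) = ⊤ then ⊤ else
      ((∫⁻ ω, ENNReal.ofReal (a ω) * ePos (ξ ω) ∂μ : ℝ≥0∞) : EReal)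
        - ((∫⁻ ω, ENNReal.ofReal (a ω) * ePos (-ξ ω) ∂μ : ℝ≥0∞) : EReal) := by
  simp only [EInt, ePos_coe_mul (ha _), ePos_neg_coe_mul (ha _)]

theorem coe_nnreal_ereal (x : NNReal) : ((x : ℝ≥0∞) : EReal) = ((x : ℝ) : EReal) := rfl

/-- Equality of extended integrals, with the convention that an infinite positive part gives `⊤`,
implies the subtraction-free identity as soon as the negative part `m` is finite. -/
theorem add_eq_add_of_sub_eq {p m p' m' : ℝ≥0∞} (hm : m ≠ ⊤)
    (h : (if p' = ⊤ then (⊤ : EReal) else (p' : EReal) - m')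
      = if p = ⊤ then (⊤ : EReal) else (p : EReal) - m) : p' + m = p + m' := by
  lift m to NNReal using hm
  induction p with
  | top =>
    induction p' with
    | top => simp
    | coe p' =>
      exfalso
      induction m' with
      | top => simp at h
      | coe m' =>
        simp at h
        have : ((p' : NNReal) : ℝ≥0∞).toReal - (m' : ℝ≥0∞).toReal < (⊤ : EReal) := by
          exact_mod_cast EReal.coe_lt_top ((p' : ℝ) - m')
        simp at this
        exact this.ne h
  | coe p =>
    induction p' with
    | top =>
      exfalso
      simp at h
      have : ((p : ℝ) - (m : ℝ) : EReal) < ⊤ := by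
          exact_mod_cast EReal.coe_lt_top ((p : ℝ) - m)
      exact this.ne h.symm
    | coe p' =>
      induction m' with
      | top =>
        exfalso
        simp at h
        have : ⊥ < ((p : ℝ) - (m : ℝ) : EReal) := by
          exact_mod_cast EReal.bot_lt_coe ((p : ℝ) - m)
        exact this.ne h
      | coe m' =>
        simp only [ENNReal.coe_ne_top, if_false, coe_nnreal_ereal] at h
        have h' : (p' : ℝ) - m' = p - m := by exact_mod_cast h
        have : (p' : ℝ) + m = p + m' := by linarith
        exact_mod_cast this

/-- Reassembly of balance on `{ξ' > 0}` (where `ξ'⁻` vanishes) and on its complement (where `ξ'⁺`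
vanishes). If `hp1 + hp2` or `hm1 + hm2` is finite, then so are `hm1` and `hp2`, and these
cancel. -/
theorem sub_eq_sub_of_add {a b hp1 hp2 hm1 hm2 : ℝ≥0∞} (h1 : a + hm1 = hp1)
    (h2 : hm2 = hp2 + b) (hq : hp1 + hp2 ≠ ⊤ ∨ hm1 + hm2 ≠ ⊤) :
    (if a = ⊤ then (⊤ : EReal) else (a : EReal) - b)
      = if hp1 + hp2 = ⊤ then (⊤ : EReal) else ((hp1 + hp2 : ℝ≥0∞) : EReal) - (hm1 + hm2 : ℝ≥0∞) := by
  subst h1 h2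
  induction hm1 with
  | top => simp at hq
  | coe hm1 =>
  induction hp2 with
  | top => simp at hq
  | coe hp2 =>
  induction a with
  | top => simp
  | coe a =>
  induction b with
  | top => simp
  | coe b =>
    have e : (a : ℝ) - b = (a + hm1 + hp2) - (hm1 + (hp2 + b)) := by ring
    norm_cast
    simp only [ENNReal.coe_ne_top, if_false, coe_nnreal_ereal]
    exact_mod_cast e

theorem balance_of_isCondExpER {G mΩ : MeasurableSpace Ω} {μ : Measure Ω}
    {ξ ξ' : Ω → EReal} (h : IsCondExpER μ G ξ ξ') (hξ : (∫⁻ ω, ePos (-ξ ω) ∂μ) ≠ ⊤)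
    {a : Ω → ℝ} (ha : Measurable[G] a) (ha0 : ∀ ω, 0 ≤ a ω) {C : ℝ} (hC : ∀ ω, a ω ≤ C) :
    Balance μ a ξ ξ' := by
  have := h.2 a ha ha0 ⟨C, hC⟩
  rw [EInt_coe_mul μ ha0, EInt_coe_mul μ ha0] at this
  refine add_eq_add_of_sub_eq ?_ this
  refine ne_top_of_le_ne_top (b := ENNReal.ofReal C * ∫⁻ ω, ePos (-ξ ω) ∂μ)
    (ENNReal.mul_ne_top ENNReal.ofReal_ne_top hξ) ?_
  rw [← lintegral_const_mul' _ _ ENNReal.ofReal_ne_top]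
  exact lintegral_mono fun ω => by gcongr; exact hC ω

theorem isCondExpER_of_balance {G mΩ : MeasurableSpace Ω} {μ : Measure Ω}
    (hG : G ≤ mΩ) {ξ ξ' : Ω → EReal} (hξ : QuasiIntegrable μ ξ)
    (hξ' : Measurable[G] ξ')
    (h : ∀ a : Ω → ℝ, Measurable[G] a → Balance μ a ξ ξ') : IsCondExpER μ G ξ ξ' := by
  refine ⟨hξ', fun a ha ha0 ⟨C, hC⟩ => ?_⟩
  rw [EInt_coe_mul μ ha0, EInt_coe_mul μ ha0]
  -- Balance alone does not imply the claim when both of its sides are infinite; localizing to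
  -- the sets where `ξ'` has a constant sign removes one term from each identity.
  set D : Set Ω := {ω | 0 < ξ' ω} with hD
  have hDm : MeasurableSet[G] D := hξ' measurableSet_Ioi
  have hDm' := hG _ hDm
  have am : Measurable a := ha.mono hG le_rfl
  have h1 := h (D.indicator a) (ha.indicator hDm)
  have h2 := h (Dᶜ.indicator a) (ha.indicator hDm.compl)
  unfold Balance at h1 h2
  have key : ∀ (s : Set Ω), MeasurableSet s → ∀ k : Ω → ℝ≥0∞,
      ∫⁻ ω, ENNReal.ofReal (s.indicator a ω) * k ω ∂μ
        = ∫⁻ ω in s, ENNReal.ofReal (a ω) * k ω ∂μ := by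
    intro s hs k
    rw [← lintegral_indicator hs]
    congr 1 with ω
    by_cases h : ω ∈ s <;> simp [h]
  simp only [key D hDm'] at h1
  simp only [key _ hDm'.compl] at h2
  have z1 : ∫⁻ ω in D, ENNReal.ofReal (a ω) * ePos (-ξ' ω) ∂μ = 0 := by
    rw [setLIntegral_congr_fun (g := fun _ => 0) hDm']
    · simp
    · intro ω hω
      have : ePos (-ξ' ω) = 0 := by
        rw [ePos_eq_toENNReal_s6, EReal.toENNReal_eq_zero_iff]
        exact EReal.neg_le_zero.2 (le_of_lt hω)
      simp [this]
  have z2 : ∫⁻ ω in Dᶜ, ENNReal.ofReal (a ω) * ePos (ξ' ω) ∂μ = 0 := by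
    rw [setLIntegral_congr_fun (g := fun _ => 0) hDm'.compl]
    · simp
    · intro ω hω
      have : ePos (ξ' ω) = 0 := by
        rw [ePos_eq_toENNReal_s6, EReal.toENNReal_eq_zero_iff]
        simpa [hD] using hω
      simp [this]
  rw [z1, add_zero] at h1
  rw [z2, zero_add] at h2
  rw [← lintegral_add_compl (fun ω => ENNReal.ofReal (a ω) * ePos (ξ' ω)) hDm',
    ← lintegral_add_compl (fun ω => ENNReal.ofReal (a ω) * ePos (-ξ' ω)) hDm',
    ← lintegral_add_compl (fun ω => ENNReal.ofReal (a ω) * ePos (ξ ω)) hDm',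
    ← lintegral_add_compl (fun ω => ENNReal.ofReal (a ω) * ePos (-ξ ω)) hDm', z1, z2,
    add_zero, zero_add]
  refine sub_eq_sub_of_add h1 h2 ?_
  rw [lintegral_add_compl _ hDm', lintegral_add_compl _ hDm']
  have fin : ∀ k : Ω → ℝ≥0∞, ∫⁻ ω, k ω ∂μ ≠ ⊤ →
      ∫⁻ ω, ENNReal.ofReal (a ω) * k ω ∂μ ≠ ⊤ := by
    intro k hk
    refine ne_top_of_le_ne_top (b := ENNReal.ofReal C * ∫⁻ ω, k ω ∂μ)
      (ENNReal.mul_ne_top ENNReal.ofReal_ne_top hk) ?_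
    rw [← lintegral_const_mul' _ _ ENNReal.ofReal_ne_top]
    exact lintegral_mono fun ω => by gcongr; exact hC ω
  exact hξ.imp (fin _) (fin _)

/-! ### Lifting from `H` to `G ⊔ H` -/

/-- Balance along all pairs `(y ∘ π, a ∘ π)` implies balance along any pair `(x, α)` that is
conditionally independent of `τ` given `π`. The three σ-algebras are encoded by the maps `π`, `τ`
and `(x, α)`, so that each carrier has a single measurable structure. -/
theorem balance_lift {E S R : Type*} [mΩ : MeasurableSpace Ω] [mS : MeasurableSpace S]
    [MeasurableSpace R] [MeasurableSpace E] [StandardBorelSpace E] [Nonempty E]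
    (μ : Measure Ω) [IsProbabilityMeasure μ] (x : Ω → E) (α : Ω → ℝ) (π : Ω → S) (τ : Ω → R)
    (hx : Measurable x) (hα : Measurable α) (hπ : Measurable π) (hτ : Measurable τ)
    (hci : ∀ B C D, MeasurableSet B → MeasurableSet C → MeasurableSet D →
      μ.real ((fun ω => (x ω, α ω)) ⁻¹' B ∩ (π ⁻¹' C ∩ τ ⁻¹' D)) =
        ∫ ω in π ⁻¹' C ∩ τ ⁻¹' D,
          (μ[((fun ω => (x ω, α ω)) ⁻¹' B).indicator fun _ => (1 : ℝ)|mS.comap π]) ω ∂μ)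
    (h : E → R → EReal) (hh : E → S → EReal)
    (hm : Measurable fun p : E × R => h p.1 p.2) (hhm : Measurable fun p : E × S => hh p.1 p.2)
    (hS : ∀ (y : S → E) (a : S → ℝ), Measurable y → Measurable a →
      Balance μ (fun ω => a (π ω)) (fun ω => h (y (π ω)) (τ ω)) (fun ω => hh (y (π ω)) (π ω))) :
    Balance μ α (fun ω => h (x ω) (τ ω)) (fun ω => hh (x ω) (π ω)) := by
  obtain ⟨φ, hφ, hφf⟩ := exists_randomization μ (fun ω => (x ω, α ω)) π τ (hx.prodMk hα) hπ hτ hci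
  have hP := measurable_ePos
  have m1 : Measurable fun p : (E × ℝ) × S × R => h p.1.1 p.2.2 :=
    hm.comp (g := fun p : E × R => h p.1 p.2)
      (f := fun p : (E × ℝ) × S × R => (p.1.1, p.2.2)) (by fun_prop)
  have m2 : Measurable fun p : (E × ℝ) × S × R => hh p.1.1 p.2.1 :=
    hhm.comp (g := fun p : E × S => hh p.1 p.2)
      (f := fun p : (E × ℝ) × S × R => (p.1.1, p.2.1)) (by fun_prop)
  have r : Measurable fun p : (E × ℝ) × S × R => ENNReal.ofReal p.1.2 := by fun_prop
  have mφ : Measurable fun p : unitInterval × Ω => (φ (π p.2) p.1, π p.2, τ p.2) := by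
    have : Measurable fun p : unitInterval × Ω => Function.uncurry φ (π p.2, p.1) := by
      fun_prop
    exact this.prodMk (by fun_prop)
  have f1 := r.mul (hP.comp m2)
  have f2 := r.mul (hP.comp m1.neg)
  have f3 := r.mul (hP.comp m1)
  have f4 := r.mul (hP.comp m2.neg)
  have h1 := hφf _ f1
  have h2 := hφf _ f2
  have h3 := hφf _ f3
  have h4 := hφf _ f4
  have g1 := (f1.comp mφ).lintegral_prod_right' (ν := μ)
  have g3 := (f3.comp mφ).lintegral_prod_right' (ν := μ)
  simp only [Function.comp_def, Pi.mul_apply, Pi.neg_apply] at h1 h2 h3 h4 g1 g3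
  unfold Balance
  rw [h1, h2, h3, h4, ← lintegral_add_left g1, ← lintegral_add_left g3]
  refine lintegral_congr fun u => ?_
  have hφu : Measurable fun s => φ s u := hφ.of_uncurry_right
  exact hS (fun s => (φ s u).1) (fun s => (φ s u).2) hφu.fst hφu.snd

/-- Neither `y` nor `a` is required to be bounded, nor `h(y(·), ·)` to be quasi-integrable. -/
theorem balance_of_isCondNI {E : Type*} [NormedAddCommGroup E] [MeasurableSpace E]
    [OpensMeasurableSpace E] {H mΩ : MeasurableSpace Ω} {μ : Measure Ω}
    (hH : H ≤ mΩ) {h hhat : E → Ω → EReal} (hLB : LBounded μ h) (hc : IsCondNI μ H h hhat)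
    {y : Ω → E} {a : Ω → ℝ} (hy : Measurable[H] y) (ha : Measurable[H] a) :
    Balance μ a (fun ω => h (y ω) ω) (fun ω => hhat (y ω) ω) := by
  obtain ⟨ρ, m, hρ, hm, hρ0, hm0, hb⟩ := hLB
  set N : Ω → ℕ := fun ω => ⌊‖y ω‖ + |a ω|⌋₊ with hN
  have hNm : Measurable[H] N :=
    Nat.measurable_floor.comp ((measurable_norm.comp hy).add (measurable_norm.comp ha))
  set s : ℕ → Set Ω := fun k => N ⁻¹' {k} with hs
  have hsm : ∀ k, MeasurableSet[H] (s k) := fun k => hNm (MeasurableSet.singleton k)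
  have hsm' : ∀ k, MeasurableSet[mΩ] (s k) := fun k => hH _ (hsm k)
  have hsd : Pairwise (Function.onFun Disjoint s) := by
    intro i j hij
    refine Set.disjoint_left.2 fun ω h1 h2 => hij ?_
    simp only [hs, Set.mem_preimage, Set.mem_singleton_iff] at h1 h2
    omega
  have hsU : ⋃ k, s k = Set.univ := by ext; simp [hs]
  have split : ∀ f : Ω → ℝ≥0∞, ∫⁻ ω, f ω ∂μ = ∑' k, ∫⁻ ω in s k, f ω ∂μ := by
    intro f
    rw [← lintegral_iUnion hsm' hsd, hsU, setLIntegral_univ]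
  have bound : ∀ ω k, ω ∈ s k → ‖y ω‖ ≤ k + 1 ∧ a ω ≤ k + 1 := by
    intro ω k hω
    simp only [hs, hN, Set.mem_preimage, Set.mem_singleton_iff] at hω
    have := Nat.lt_floor_add_one (‖y ω‖ + |a ω|)
    rw [hω] at this
    have h1 := norm_nonneg (y ω)
    have h2 := abs_nonneg (a ω)
    have h3 := le_abs_self (a ω)
    constructor <;> linarith
  have main : ∀ k,
      (∫⁻ ω in s k, ENNReal.ofReal (a ω) * ePos (hhat (y ω) ω) ∂μ)
        + (∫⁻ ω in s k, ENNReal.ofReal (a ω) * ePos (-h (y ω) ω) ∂μ)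
      = (∫⁻ ω in s k, ENNReal.ofReal (a ω) * ePos (h (y ω) ω) ∂μ)
        + ∫⁻ ω in s k, ENNReal.ofReal (a ω) * ePos (-hhat (y ω) ω) ∂μ := by
    intro k
    have hyk : Measurable[H] ((s k).indicator y) := hy.indicator (hsm k)
    have hak : Measurable[H] ((s k).indicator (fun ω => max (a ω) 0)) :=
      (ha.max measurable_const).indicator (hsm k)
    have hfin : (∫⁻ ω, ePos (-h ((s k).indicator y ω) ω) ∂μ) ≠ ⊤ := by
      have hint : Integrable (fun ω => ρ ω * (k + 1) + m ω) μ := (hρ.mul_const _).add hm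
      refine ne_top_of_le_ne_top hint.lintegral_lt_top.ne (lintegral_mono_ae ?_)
      filter_upwards [hb] with ω hω
      rw [← EReal.real_coe_toENNReal, ePos_eq_toENNReal_s6]
      refine EReal.toENNReal_le_toENNReal ?_
      rw [EReal.neg_le]
      refine le_trans ?_ (hω _)
      rw [← EReal.coe_neg, EReal.coe_le_coe_iff]
      have : ‖(s k).indicator y ω‖ ≤ k + 1 := by
        by_cases hk : ω ∈ s k
        · simpa [hk] using (bound ω k hk).1
        · simp [hk]; positivity
      have := mul_le_mul_of_nonneg_left this (hρ0 ω)
      linarith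
    have hB := balance_of_isCondExpER (hc.2 _ hyk (Or.inr hfin)) hfin hak
      (fun ω => Set.indicator_nonneg (fun _ _ => le_max_right _ _) ω) (C := k + 1) (fun ω => by
        by_cases hk : ω ∈ s k
        · simp only [hk, Set.indicator_of_mem]
          exact max_le (bound ω k hk).2 (by positivity)
        · simp [hk]; positivity)
    unfold Balance at hB
    have conv : ∀ F : E → Ω → ℝ≥0∞,
        ∫⁻ ω, ENNReal.ofReal ((s k).indicator (fun ω => max (a ω) 0) ω)
          * F ((s k).indicator y ω) ω ∂μ
        = ∫⁻ ω in s k, ENNReal.ofReal (a ω) * F (y ω) ω ∂μ := by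
      intro F
      rw [← lintegral_indicator (hsm' k)]
      congr 1 with ω
      by_cases hk : ω ∈ s k <;> simp [hk]
    rw [conv (fun z ω => ePos (h z ω)), conv (fun z ω => ePos (-h z ω)),
      conv (fun z ω => ePos (hhat z ω)), conv (fun z ω => ePos (-hhat z ω))] at hB
    exact hB
  unfold Balance
  rw [split (fun ω => ENNReal.ofReal (a ω) * ePos (hhat (y ω) ω)),
    split (fun ω => ENNReal.ofReal (a ω) * ePos (-h (y ω) ω)),
    split (fun ω => ENNReal.ofReal (a ω) * ePos (h (y ω) ω)),
    split (fun ω => ENNReal.ofReal (a ω) * ePos (-hhat (y ω) ω)),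
    ← ENNReal.tsum_add, ← ENNReal.tsum_add]
  exact tsum_congr main

theorem isCondNI_sup {E : Type*} [NormedAddCommGroup E] [mE : MeasurableSpace E]
    [BorelSpace E] [StandardBorelSpace E] {H A G mΩ : MeasurableSpace Ω} {μ : Measure Ω}
    [IsProbabilityMeasure μ]
    (hH : H ≤ mΩ) (hA : A ≤ mΩ) (hG : G ≤ mΩ) (hci : CondIndepSA μ H A G)
    {h hhat : E → Ω → EReal} (hLB : LBounded μ h)
    (hAm : Measurable[mE.prod A] (fun p : E × Ω => h p.1 p.2))
    (hc : IsCondNI μ H h hhat) : IsCondNI μ (G ⊔ H) h hhat := by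
  have hGH : G ⊔ H ≤ mΩ := sup_le hG hH
  have hle : mE.prod H ≤ mE.prod (G ⊔ H) :=
    sup_le_sup le_rfl (MeasurableSpace.comap_mono le_sup_right)
  refine ⟨⟨hc.1.1.mono hle le_rfl, hc.1.2⟩, fun x hx hq => ?_⟩
  have hxm : Measurable[mΩ] x := hx.mono hGH le_rfl
  refine isCondExpER_of_balance hGH hq ?_ fun α hα => ?_
  · exact (hc.1.1.mono hle le_rfl).comp (hx.prodMk measurable_id)
  · have hαm : Measurable[mΩ] α := hα.mono hGH le_rfl
    refine @balance_lift Ω E Ω Ω mΩ H A mE _ _ μ _ x α id id hxm hαm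
      (measurable_id'' hH) (measurable_id'' hA) ?_ h hhat hAm hc.1.1 ?_
    · intro B C D hB hC hD
      rw [MeasurableSpace.comap_id]
      exact measureReal_inter_eq μ H A G hH hA hG hci hD hC
        ((hx.prodMk hα) hB)
    · intro y a hy ha
      exact balance_of_isCondNI hH hLB hc hy ha

/-! ### The trivial σ-algebra -/

theorem ePos_add_coe {v : EReal} {r : ℝ} (hr : 0 ≤ r) (hv : ((-r : ℝ) : EReal) ≤ v) :
    ePos (v + r) + ePos (-v) = ePos v + ENNReal.ofReal r := by
  rw [ePos_eq_toENNReal_s6]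
  induction v with
  | bot => simp at hv
  | top => simp
  | coe v =>
    have hv' : -r ≤ v := by exact_mod_cast hv
    rw [← EReal.coe_add, ← EReal.coe_neg]
    simp only [EReal.real_coe_toENNReal]
    rcases le_total 0 v with h | h
    · rw [ENNReal.ofReal_of_nonpos (by linarith : -v ≤ 0), add_zero, ENNReal.ofReal_add h hr]
    · rw [ENNReal.ofReal_of_nonpos h, zero_add, ← ENNReal.ofReal_add (by linarith) (by linarith)]
      congr 1; ring

theorem sub_eq_add_coe_of_add_eq {φ p m : ℝ≥0∞} {r : ℝ} (hr : 0 ≤ r) (hm : m ≠ ⊤)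
    (h : φ + m = p + ENNReal.ofReal r) : (p : EReal) - m = φ + ((-r : ℝ) : EReal) := by
  lift m to NNReal using hm
  lift r to NNReal using hr
  rw [ENNReal.ofReal_coe_nnreal] at h
  induction p with
  | top =>
    obtain rfl : φ = ⊤ := by simpa using h
    simp [coe_nnreal_ereal, sub_eq_add_neg, ← EReal.coe_neg]
  | coe p =>
    induction φ with
    | top => exact absurd h (by simp [← ENNReal.coe_add])
    | coe φ =>
      have h' : (φ : ℝ) + m = p + r := by exact_mod_cast h
      have : (p : ℝ) - m = φ + (-r) := by linarith
      simp only [coe_nnreal_ereal]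
      exact_mod_cast this

theorem measurable_bot_apply_eq {E : Type*} [MeasurableSpace E] [MeasurableSingletonClass E]
    {x : Ω → E} (hx : Measurable[⊥] x) (ω ω' : Ω) : x ω = x ω' := by
  rcases MeasurableSpace.measurableSet_bot_iff.1 (hx (measurableSet_singleton (x ω'))) with h | h
  · have : ω' ∈ x ⁻¹' {x ω'} := rfl
    simp [h] at this
  · have : ω ∈ x ⁻¹' {x ω'} := by simp [h]
    exact this

/-- The function `y ↦ E[h(y, ·)]` is a conditional expectation of `h` with respect to the trivial
σ-algebra. Lower semicontinuity comes from `E[h(y, ·)] = E[h(y, ·) + ρ‖y‖ + m] - E[ρ‖y‖ + m]`. -/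
theorem exists_isCondNI_bot {E : Type*} [NormedAddCommGroup E] [mE : MeasurableSpace E]
    [BorelSpace E] {mΩ : MeasurableSpace Ω} (μ : Measure Ω)
    [IsProbabilityMeasure μ] {h : E → Ω → EReal} (hNI : IsNormalIntegrand mΩ h)
    (hLB : LBounded μ h) :
    ∃ h₀ : E → EReal, IsCondNI μ ⊥ h (fun x _ => h₀ x) := by
  obtain ⟨ρ, m, hρ, hm, hρ0, hm0, hb⟩ := hLB
  have hmeas : ∀ y, Measurable (h y) := fun y => hNI.1.comp measurable_prodMk_left
  set r : E → Ω → ℝ := fun y ω => ρ ω * ‖y‖ + m ω with hr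
  have hr0 : ∀ y ω, 0 ≤ r y ω := fun y ω =>
    add_nonneg (mul_nonneg (hρ0 ω) (norm_nonneg _)) (hm0 ω)
  have hri : ∀ y, Integrable (r y) μ := fun y => (hρ.mul_const _).add hm
  set P : E → ℝ≥0∞ := fun y => ∫⁻ ω, ePos (h y ω) ∂μ with hP
  set M : E → ℝ≥0∞ := fun y => ∫⁻ ω, ePos (-h y ω) ∂μ with hM
  set φ : E → ℝ≥0∞ := fun y => ∫⁻ ω, ePos (h y ω + (r y ω : EReal)) ∂μ with hφ
  have hMfin : ∀ y, M y ≠ ⊤ := by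
    intro y
    refine ne_top_of_le_ne_top (hri y).lintegral_lt_top.ne (lintegral_mono_ae ?_)
    filter_upwards [hb] with ω hω
    rw [← EReal.real_coe_toENNReal, ePos_eq_toENNReal_s6]
    refine EReal.toENNReal_le_toENNReal ?_
    rw [EReal.neg_le, ← EReal.coe_neg]
    exact hω y
  have hEr : ∀ y, ∫ ω, r y ω ∂μ = (∫ ω, ρ ω ∂μ) * ‖y‖ + ∫ ω, m ω ∂μ := by
    intro y
    rw [hr, integral_add (hρ.mul_const _) hm, integral_mul_const]
  have hsum : ∀ y, φ y + M y = P y + ENNReal.ofReal (∫ ω, r y ω ∂μ) := by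
    intro y
    rw [ofReal_integral_eq_lintegral_ofReal (hri y) (Filter.Eventually.of_forall (hr0 y)),
      hφ, hM, hP]
    simp only
    have m1 : Measurable fun ω => ePos (h y ω) := measurable_ePos.comp (hmeas y)
    have m2 : Measurable fun ω => ePos (-h y ω) := measurable_ePos.comp (hmeas y).neg
    rw [← lintegral_add_right _ m2, ← lintegral_add_left m1]
    refine lintegral_congr_ae ?_
    filter_upwards [hb] with ω hω
    exact ePos_add_coe (hr0 y ω) (hω y)
  have hsub : ∀ y, (P y : EReal) - M y = φ y + ((-∫ ω, r y ω ∂μ : ℝ) : EReal) := fun y =>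
    sub_eq_add_coe_of_add_eq (integral_nonneg (hr0 y)) (hMfin y) (hsum y)
  have hφlsc : LowerSemicontinuous φ := by
    rw [lowerSemicontinuous_iff_le_liminf]
    intro y
    have hae : ∀ y, AEMeasurable (fun ω => ePos (h y ω + (r y ω : EReal))) μ := fun y =>
      measurable_ePos.comp_aemeasurable
        ((hmeas y).aemeasurable.add (hri y).aemeasurable.coe_real_ereal)
    refine le_trans (lintegral_mono fun ω => ?_) (lintegral_liminf_le' hae)
    refine LowerSemicontinuousAt.le_liminf (f := fun y => ePos (h y ω + (r y ω : EReal))) ?_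
    have h1 : LowerSemicontinuousAt (fun y => h y ω + (r y ω : EReal)) y := by
      refine LowerSemicontinuousAt.add' (hNI.2.1 ω y) ?_ ?_
      · have : Continuous fun y => (r y ω : EReal) :=
          continuous_coe_real_ereal.comp (by simp only [hr]; fun_prop)
        exact this.lowerSemicontinuous y
      · exact EReal.continuousAt_add (Or.inr (EReal.coe_ne_bot _)) (Or.inr (EReal.coe_ne_top _))
    exact EReal.continuous_toENNReal.continuousAt.comp_lowerSemicontinuousAt h1
      (fun _ _ => EReal.toENNReal_le_toENNReal)
  have hlsc : LowerSemicontinuous fun y => (P y : EReal) - M y := by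
    simp only [hsub]
    refine LowerSemicontinuous.add' ?_ ?_ fun y => ?_
    · exact continuous_coe_ennreal_ereal.comp_lowerSemicontinuous hφlsc
        (fun _ _ => EReal.coe_ennreal_le_coe_ennreal_iff.2)
    · have : Continuous fun y => ((-∫ ω, r y ω ∂μ : ℝ) : EReal) := by
        simp only [hEr]
        exact continuous_coe_real_ereal.comp (by fun_prop)
      exact this.lowerSemicontinuous
    · exact EReal.continuousAt_add (Or.inr (EReal.coe_ne_bot _)) (Or.inr (EReal.coe_ne_top _))
  refine ⟨fun y => (P y : EReal) - M y, ⟨?_, fun _ => hlsc, fun y _ => ?_⟩, fun x hx hq => ?_⟩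
  · exact hlsc.measurable.comp (@measurable_fst _ _ mE ⊥)
  · change (P y : EReal) - M y ≠ ⊥
    rw [hsub]
    simp [EReal.add_eq_bot_iff]
  · refine isCondExpER_of_balance bot_le hq ?_ fun a ha => ?_
    · exact hlsc.measurable.comp hx
    · obtain ⟨ω₀⟩ : Nonempty Ω := nonempty_of_isProbabilityMeasure μ
      have hxc : ∀ ω, x ω = x ω₀ := fun ω => measurable_bot_apply_eq hx ω ω₀
      have hac : ∀ ω, a ω = a ω₀ := fun ω => measurable_bot_apply_eq ha ω ω₀
      unfold Balance
      simp only [hxc, hac]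
      simp only [lintegral_const_mul' _ _ ENNReal.ofReal_ne_top]
      simp only [lintegral_const, measure_univ, mul_one, ← mul_add]
      congr 1
      change ePos ((P (x ω₀) : EReal) - M (x ω₀)) + M (x ω₀)
        = P (x ω₀) + ePos (-((P (x ω₀) : EReal) - M (x ω₀)))
      have hfin := hMfin (x ω₀)
      generalize P (x ω₀) = p, M (x ω₀) = q at hfin ⊢
      lift q to NNReal using hfin
      rw [ePos_eq_toENNReal_s6]
      induction p with
      | top => simp [coe_nnreal_ereal, sub_eq_add_neg, ← EReal.coe_neg]
      | coe p =>
        simp only [coe_nnreal_ereal]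
        rw [← EReal.coe_sub, ← EReal.coe_neg]
        simp only [EReal.real_coe_toENNReal]
        rcases le_total (p : ℝ) q with h | h
        · rw [ENNReal.ofReal_of_nonpos (by linarith), zero_add, neg_sub, ← ENNReal.ofReal_coe_nnreal,
            ← ENNReal.ofReal_coe_nnreal, ← ENNReal.ofReal_add (by positivity) (by linarith)]
          congr 1; ring
        · rw [ENNReal.ofReal_of_nonpos (by linarith : -((p : ℝ) - q) ≤ 0), add_zero,
            ← ENNReal.ofReal_coe_nnreal,
            ← ENNReal.ofReal_coe_nnreal, ← ENNReal.ofReal_add (by linarith) (by positivity)]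
          congr 1; ring

/-- Theorem 2.10: if the `B(ℝⁿ)⊗A`-measurable L-bounded normal
integrand `h` is such that `A` and `G` are `H`-conditionally independent, then every
`H`-conditional expectation of `h` is also a `(G ∨ H)`-conditional expectation of `h`;
and if `A` is independent of `G` and `H` is trivial, then `h` admits a deterministic
`G`-conditional expectation. -/
theorem statement6 {Ω : Type*} {mΩ : MeasurableSpace Ω} (μ : Measure Ω)
    [IsProbabilityMeasure μ] (hcompl : μ.IsComplete)
    (H A G : MeasurableSpace Ω) (hH : H ≤ mΩ) (hA : A ≤ mΩ) (hG : G ≤ mΩ)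
    (hci : CondIndepSA μ H A G) (n : ℕ)
    (h : EuclideanSpace ℝ (Fin n) → Ω → EReal)
    (hNI : IsNormalIntegrand mΩ h) (hLB : LBounded μ h)
    (hAmeas : Measurable[MeasurableSpace.prod inferInstance A]
      (fun p : EuclideanSpace ℝ (Fin n) × Ω => h p.1 p.2)) :
    (∀ hhat : EuclideanSpace ℝ (Fin n) → Ω → EReal,
      IsCondNI μ H h hhat → IsCondNI μ (G ⊔ H) h hhat) ∧
    (H = ⊥ → ProbabilityTheory.Indep A G μ →
      ∃ h₀ : EuclideanSpace ℝ (Fin n) → EReal,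
        IsCondNI μ G h (fun x _ => h₀ x)) := by
  refine ⟨fun hhat hc => isCondNI_sup hH hA hG hci hLB hAmeas hc, fun hbot _ => ?_⟩
  obtain ⟨h₀, hc⟩ := exists_isCondNI_bot μ hNI hLB
  subst hbot
  have := isCondNI_sup hH hA hG hci hLB hAmeas hc
  rw [sup_bot_eq] at this
  exact ⟨h₀, this⟩

end PaperDP
end
end
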